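/- Let d ≥ 3 be an integer. There exist constants C > 0 and C' > 0 such that for every integer l ≥ 0 and every μ ≥ 2, | 𝒩_l(μ) − 𝒲_l(μ) | ≤ 𝒲_l(μ + C μ^{−3/7}) − 𝒲_l(μ − C μ^{−3/7}) + C' μ^{4/7}, where 𝒩_l(μ) = Σ_{n=l}^∞ #{x ∈ (0, μ] : J_{n+d/2−1}(x) = 0}. -/

import Mathlib

open Real MeasureTheory Set

/-- The Bessel function of the first kind of order `ν ≥ 0`, for `x > 0`, via the
integral representation. -/
noncomputable def besselJ (ν x : ℝ) : ℝ :=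
  (1 / π) * (∫ θ in (0:ℝ)..π, Real.cos (x * Real.sin θ - ν * θ)) -
    (Real.sin (ν * π) / π) * ∫ t in Set.Ioi (0:ℝ), Real.exp (-x * Real.sinh t - ν * t)

/-- The function `g(t) = (√(1-t²) - t arccos t)/π`. -/
noncomputable def gfun (t : ℝ) : ℝ := (Real.sqrt (1 - t ^ 2) - t * Real.arccos t) / π

/-- The lattice count `𝒲_l(μ) = #{(n,k) ∈ ℤ×ℤ : n ≥ l, k ≥ 1, n + d/2 - 1 ≤ μ,
k - 1/4 ≤ μ g((n + d/2 - 1)/μ)}`. -/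
noncomputable def latticeW (d l : ℕ) (μ : ℝ) : ℕ :=
  {p : ℤ × ℤ | (l : ℤ) ≤ p.1 ∧ 1 ≤ p.2 ∧ (p.1 : ℝ) + (d : ℝ) / 2 - 1 ≤ μ ∧
    (p.2 : ℝ) - 1 / 4 ≤ μ * gfun (((p.1 : ℝ) + (d : ℝ) / 2 - 1) / μ)}.ncard

/-- The number of zeros of `J_ν` in `(0, μ]`. -/
noncomputable def zcount (ν μ : ℝ) : ℕ := {x : ℝ | 0 < x ∧ x ≤ μ ∧ besselJ ν x = 0}.ncard


lemma monoOn_of {D : Set ℝ} (hD : Convex ℝ D) {f : ℝ → ℝ} (hc : ContinuousOn f D)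
    (h : ∀ x ∈ interior D, ∃ y, HasDerivAt f y x ∧ 0 ≤ y) : MonotoneOn f D := by
  refine monotoneOn_of_deriv_nonneg hD hc ?_ ?_
  · intro x hx
    obtain ⟨y, hy, -⟩ := h x hx
    exact hy.differentiableAt.differentiableWithinAt
  · intro x hx
    obtain ⟨y, hy, h0⟩ := h x hx
    rw [hy.deriv]; exact h0

lemma antiOn_of {D : Set ℝ} (hD : Convex ℝ D) {f : ℝ → ℝ} (hc : ContinuousOn f D)
    (h : ∀ x ∈ interior D, ∃ y, HasDerivAt f y x ∧ y ≤ 0) : AntitoneOn f D := by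
  refine antitoneOn_of_deriv_nonpos hD hc ?_ ?_
  · intro x hx
    obtain ⟨y, hy, -⟩ := h x hx
    exact hy.differentiableAt.differentiableWithinAt
  · intro x hx
    obtain ⟨y, hy, h0⟩ := h x hx
    rw [hy.deriv]; exact h0

/-- `ω = √(x² - ν²)`. -/
noncomputable def om (ν x : ℝ) : ℝ := Real.sqrt (x ^ 2 - ν ^ 2)

/-- `S = π x g(ν/x)`. -/
noncomputable def Sf (ν x : ℝ) : ℝ := om ν x - ν * Real.arccos (ν / x)

/-- `E = x² / ω³`. -/
noncomputable def Ef (ν x : ℝ) : ℝ := x ^ 2 / om ν x ^ 3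

lemma om_pos {ν x : ℝ} (hν : 0 ≤ ν) (hx : ν < x) : 0 < om ν x := by
  apply Real.sqrt_pos.2; nlinarith

lemma om_nonneg (ν x : ℝ) : 0 ≤ om ν x := Real.sqrt_nonneg _

lemma om_sq {ν x : ℝ} (hν : 0 ≤ ν) (hx : ν ≤ x) : om ν x ^ 2 = x ^ 2 - ν ^ 2 := by
  apply Real.sq_sqrt; nlinarith

lemma om_hasDeriv {ν x : ℝ} (hν : 0 ≤ ν) (hx : ν < x) :
    HasDerivAt (om ν) (x / om ν x) x := by
  have h1 : HasDerivAt (fun x : ℝ => x ^ 2 - ν ^ 2) (2 * x) x := by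
    simpa using (hasDerivAt_pow 2 x).sub_const (ν ^ 2)
  have h2 := h1.sqrt (by nlinarith)
  have h3 : om ν = fun x => Real.sqrt (x ^ 2 - ν ^ 2) := rfl
  rw [h3]
  convert h2 using 1
  have := om_pos hν hx
  simp only [om] at *
  field_simp

lemma om_cont (ν : ℝ) : Continuous (om ν) := by
  unfold om; fun_prop

lemma om_scale {ν x : ℝ} (hx : 0 < x) : x * Real.sqrt (1 - (ν / x) ^ 2) = om ν x := by
  unfold om
  have : x ^ 2 - ν ^ 2 = x ^ 2 * (1 - (ν / x) ^ 2) := by field_simp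
  rw [this, Real.sqrt_mul (by positivity), Real.sqrt_sq hx.le]

lemma Sf_gfun {ν x : ℝ} (hx : 0 < x) : x * gfun (ν / x) = Sf ν x / π := by
  unfold gfun Sf
  rw [← om_scale hx]
  field_simp

lemma Sf_hasDeriv {ν x : ℝ} (hν : 0 < ν) (hx : ν < x) :
    HasDerivAt (Sf ν) (om ν x / x) x := by
  have hx0 : 0 < x := hν.trans hx
  have hlt : ν / x < 1 := by rw [div_lt_one hx0]; exact hx
  have hpos : 0 < ν / x := by positivity
  have h1 : HasDerivAt (fun x : ℝ => ν / x) (-ν / x ^ 2) x := by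
    have := (hasDerivAt_inv hx0.ne').const_mul ν
    simp only [div_eq_mul_inv]
    refine this.congr_deriv ?_
    ring
  have h2 := (Real.hasDerivAt_arccos (x := ν / x) (by linarith) (by linarith)).comp x h1
  have h3 := (om_hasDeriv hν.le hx).sub (h2.const_mul ν)
  refine (h3.congr_deriv ?_)
  have hs := om_scale (ν := ν) hx0
  have ho := om_pos hν.le hx
  have hsq := om_sq hν.le hx.le
  have hs' : Real.sqrt (1 - (ν / x) ^ 2) = om ν x / x := by
    rw [← hs]; field_simp
  rw [hs']
  field_simp
  linarith

lemma Sf_cont {ν : ℝ} (hν : 0 < ν) : ContinuousOn (Sf ν) (Ici ν) := by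
  unfold Sf
  apply ContinuousOn.sub (om_cont ν).continuousOn
  apply ContinuousOn.mul continuousOn_const
  apply Real.continuous_arccos.comp_continuousOn
  apply ContinuousOn.div continuousOn_const continuousOn_id
  intro x hx
  exact (hν.trans_le hx).ne'

lemma Sf_self {ν : ℝ} (hν : 0 < ν) : Sf ν ν = 0 := by
  simp [Sf, om, hν.ne']

lemma Sf_mono {ν : ℝ} (hν : 0 < ν) : MonotoneOn (Sf ν) (Ici ν) := by
  apply monoOn_of (convex_Ici ν) (Sf_cont hν)
  intro x hx
  rw [interior_Ici] at hx
  exact ⟨_, Sf_hasDeriv hν hx, div_nonneg (om_nonneg _ _) (hν.trans hx).le⟩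

lemma Sf_nonneg {ν x : ℝ} (hν : 0 < ν) (hx : ν ≤ x) : 0 ≤ Sf ν x := by
  have := Sf_mono hν (mem_Ici.2 le_rfl) (mem_Ici.2 hx) hx
  rwa [Sf_self hν] at this

/-- `S ≤ 1/E`. -/
lemma Sf_le {ν x : ℝ} (hν : 0 < ν) (hx : ν ≤ x) : Sf ν x ≤ om ν x ^ 3 / x ^ 2 := by
  have hm : MonotoneOn (fun x => om ν x ^ 3 / x ^ 2 - Sf ν x) (Ici ν) := by
    apply monoOn_of (convex_Ici ν)
    · apply ContinuousOn.sub _ (Sf_cont hν)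
      apply ContinuousOn.div ((om_cont ν).pow 3).continuousOn (continuous_pow 2).continuousOn
      intro x hx
      have : 0 < x := hν.trans_le hx
      positivity
    · intro y hy
      rw [interior_Ici] at hy
      have hy0 : 0 < y := hν.trans hy
      have ho := om_pos hν.le hy
      have hsq := om_sq hν.le (le_of_lt hy)
      refine ⟨_, (((om_hasDeriv hν.le hy).pow 3).div (hasDerivAt_pow 2 y) (by positivity)).sub
        (Sf_hasDeriv hν hy), ?_⟩
      have : ((((3:ℕ):ℝ) * om ν y ^ (3 - 1) * (y / om ν y) * y ^ 2 - om ν y ^ 3 * (((2:ℕ):ℝ) * y ^ (2 - 1))) / (y ^ 2) ^ 2 - om ν y / y)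
        = om ν y * (2 * ν ^ 2) / y ^ 3 := by
        push_cast
        have h2 : ν ^ 2 = y ^ 2 - om ν y ^ 2 := by linarith
        rw [h2]
        field_simp
        ring
      refine le_of_le_of_eq ?_ this.symm
      positivity
  have := hm (mem_Ici.2 le_rfl) (mem_Ici.2 hx) hx
  simp only [Sf_self hν] at this
  have h0 : om ν ν = 0 := by simp [om]
  rw [h0] at this
  simp at this
  linarith

lemma Ef_pos {ν x : ℝ} (hν : 0 < ν) (hx : ν < x) : 0 < Ef ν x := by
  have := om_pos hν.le hx
  have : 0 < x := hν.trans hx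
  unfold Ef; positivity

lemma Sf_le_inv {ν x : ℝ} (hν : 0 < ν) (hx : ν < x) : Sf ν x * Ef ν x ≤ 1 := by
  have h := Sf_le hν hx.le
  have h0 : 0 < x := hν.trans hx
  have h1 := om_pos hν.le hx
  calc Sf ν x * Ef ν x ≤ om ν x ^ 3 / x ^ 2 * Ef ν x :=
        mul_le_mul_of_nonneg_right h (Ef_pos hν hx).le
    _ = 1 := by unfold Ef; field_simp

/-- convexity in the order -/
lemma Sf_order {ν₁ ν₂ x : ℝ} (h1 : 0 < ν₁) (h12 : ν₁ ≤ ν₂) (hx : ν₂ < x) :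
    (ν₂ - ν₁) * (om ν₂ x / x) ≤ Sf ν₁ x - Sf ν₂ x := by
  have hx0 : 0 < x := by linarith
  have ha : AntitoneOn (fun ν => Sf ν x + ν * (om ν₂ x / x)) (Icc ν₁ ν₂) := by
    apply antiOn_of (convex_Icc _ _)
    · apply Continuous.continuousOn
      unfold Sf om
      have := Real.continuous_arccos
      fun_prop
    · intro ν hν
      rw [interior_Icc] at hν
      have hν0 : 0 < ν := h1.trans hν.1
      have hνx : ν < x := hν.2.trans hx
      have hlt : ν / x < 1 := by rw [div_lt_one hx0]; exact hνx
      have hpos : 0 < ν / x := by positivity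
      have hd1 : HasDerivAt (fun ν => om ν x) (-ν / om ν x) ν := by
        have h1 : HasDerivAt (fun ν : ℝ => x ^ 2 - ν ^ 2) (-(2 * ν)) ν := by
          simpa using (hasDerivAt_pow 2 ν).const_sub (x ^ 2)
        have h2 := h1.sqrt (by nlinarith)
        refine h2.congr_deriv ?_
        have := om_pos hν0.le hνx
        simp only [om] at *
        field_simp
      have hd2 : HasDerivAt (fun ν : ℝ => ν / x) (1 / x) ν := (hasDerivAt_id ν).div_const x
      have hd3 := (Real.hasDerivAt_arccos (x := ν / x) (by linarith) (by linarith)).comp ν hd2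
      have hd4 := (hd1.sub ((hasDerivAt_id ν).mul hd3)).add
        ((hasDerivAt_id ν).mul_const (om ν₂ x / x))
      refine ⟨_, hd4, ?_⟩
      have hs := om_scale (ν := ν) hx0
      have ho := om_pos hν0.le hνx
      have hs' : Real.sqrt (1 - (ν / x) ^ 2) = om ν x / x := by
        rw [← hs]; field_simp
      rw [hs']
      have hm1 : om ν₂ x / x ≤ om ν x / x := by
        apply div_le_div_of_nonneg_right _ hx0.le
        apply Real.sqrt_le_sqrt
        nlinarith [hν.2]
      have hm2 : om ν x / x ≤ Real.arccos (ν / x) := by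
        rw [← hs', ← Real.sin_arccos]
        exact Real.sin_le (Real.arccos_nonneg _)
      have : -ν / om ν x - (1 * (Real.arccos ∘ fun ν => ν / x) ν + id ν * (-(1 / (om ν x / x)) * (1 / x))) + 1 * (om ν₂ x / x) = -Real.arccos (ν / x) + om ν₂ x / x := by
        simp only [Function.comp, id]
        field_simp
        ring
      exact this.trans_le (by linarith)
  have := ha (left_mem_Icc.2 h12) (right_mem_Icc.2 h12) h12
  simp only at this
  nlinarith


/-- `f` solves Bessel's equation on `(0,∞)`, with derivative `f1`. -/
structure BODE (ν : ℝ) (f f1 : ℝ → ℝ) : Prop where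
  hf : ∀ x, 0 < x → HasDerivAt f (f1 x) x
  hf1 : ∀ x, 0 < x → HasDerivAt f1 (-f1 x / x - (1 - ν ^ 2 / x ^ 2) * f x) x

lemma BODE.neg {ν : ℝ} {f f1 : ℝ → ℝ} (h : BODE ν f f1) :
    BODE ν (fun x => -f x) (fun x => -f1 x) where
  hf := fun x hx => (h.hf x hx).neg
  hf1 := fun x hx => (h.hf1 x hx).neg.congr_deriv (by ring)

lemma BODE.cont {ν : ℝ} {f f1 : ℝ → ℝ} (h : BODE ν f f1) : ContinuousOn f (Ioi 0) :=
  fun x hx => (h.hf x hx).continuousAt.continuousWithinAt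

lemma BODE.cont1 {ν : ℝ} {f f1 : ℝ → ℝ} (h : BODE ν f f1) : ContinuousOn f1 (Ioi 0) :=
  fun x hx => (h.hf1 x hx).continuousAt.continuousWithinAt

lemma BODE.hasDeriv_a {ν : ℝ} {f f1 : ℝ → ℝ} (h : BODE ν f f1) {x : ℝ} (hx : 0 < x) :
    HasDerivAt (fun x => x * f1 x) (-((x ^ 2 - ν ^ 2) / x) * f x) x := by
  refine ((hasDerivAt_id x).mul (h.hf1 x hx)).congr_deriv ?_
  simp only [id]
  field_simp
  ring

lemma BODE.uniq {ν : ℝ} {f f1 : ℝ → ℝ} (h : BODE ν f f1) {x₁ : ℝ} (hx₁ : 0 < x₁)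
    (h0 : f x₁ = 0) (h1 : f1 x₁ = 0) : ∀ x, 0 < x → f x = 0 := by
  have he : ∀ y, 0 < y → HasDerivAt (fun x => f x ^ 2 + f1 x ^ 2)
      (-2 * f1 y ^ 2 / y + 2 * (ν ^ 2 / y ^ 2) * (f y * f1 y)) y := by
    intro y hy
    refine (((h.hf y hy).pow 2).add ((h.hf1 y hy).pow 2)).congr_deriv ?_
    push_cast
    ring
  have key : ∀ a y : ℝ, 0 < a → a ≤ y →
      |(-2 * f1 y ^ 2 / y + 2 * (ν ^ 2 / y ^ 2) * (f y * f1 y))| ≤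
        (2 / a + ν ^ 2 / a ^ 2) * (f y ^ 2 + f1 y ^ 2) := by
    intro a y ha hay
    have hy : 0 < y := ha.trans_le hay
    have e1 : 1 / y ≤ 1 / a := one_div_le_one_div_of_le ha hay
    have e2 : ν ^ 2 / y ^ 2 ≤ ν ^ 2 / a ^ 2 := by
      apply div_le_div_of_nonneg_left (by positivity) (by positivity)
      exact pow_le_pow_left₀ ha.le hay 2
    have e3 : 0 ≤ ν ^ 2 / y ^ 2 := by positivity
    have e4 : 0 < 1 / y := by positivity
    have e5 : |2 * (f y * f1 y)| ≤ f y ^ 2 + f1 y ^ 2 := by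
      rw [abs_le]; constructor <;> nlinarith [sq_nonneg (f y - f1 y), sq_nonneg (f y + f1 y)]
    calc _ ≤ |(-2 * f1 y ^ 2 / y)| + |2 * (ν ^ 2 / y ^ 2) * (f y * f1 y)| := abs_add_le _ _
      _ = 2 * (1 / y) * f1 y ^ 2 + (ν ^ 2 / y ^ 2) * |2 * (f y * f1 y)| := by
        congr 1
        · rw [abs_of_nonpos]
          · ring
          · have : 0 ≤ f1 y ^ 2 / y := by positivity
            have e : -2 * f1 y ^ 2 / y = -2 * (f1 y ^ 2 / y) := by ring
            rw [e]; linarith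
        · rw [← abs_of_nonneg e3, ← abs_mul, abs_of_nonneg e3]
          congr 1; ring
      _ ≤ 2 * (1 / a) * (f y ^ 2 + f1 y ^ 2) + (ν ^ 2 / a ^ 2) * (f y ^ 2 + f1 y ^ 2) := by
        gcongr
        nlinarith [sq_nonneg (f y)]
      _ = _ := by ring
  have fin : ∀ x, f x ^ 2 + f1 x ^ 2 ≤ 0 → f x = 0 := by
    intro x hx
    have : f x ^ 2 = 0 := le_antisymm (by nlinarith [sq_nonneg (f1 x)]) (sq_nonneg _)
    exact pow_eq_zero_iff (two_ne_zero) |>.1 this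
  intro x hx
  apply fin
  rcases le_total x₁ x with hle | hle
  · set K := 2 / x₁ + ν ^ 2 / x₁ ^ 2
    have hd : ∀ y ∈ Ici x₁, HasDerivAt (fun x => (f x ^ 2 + f1 x ^ 2) * exp (-K * x))
        ((-2 * f1 y ^ 2 / y + 2 * (ν ^ 2 / y ^ 2) * (f y * f1 y)) * exp (-K * y) +
          (f y ^ 2 + f1 y ^ 2) * (exp (-K * y) * -K)) y := by
      intro y hy
      refine (he y (hx₁.trans_le hy)).mul ?_
      refine HasDerivAt.exp ?_
      exact ((hasDerivAt_id y).const_mul (-K)).congr_deriv (by simp)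
    have hanti : AntitoneOn (fun x => (f x ^ 2 + f1 x ^ 2) * exp (-K * x)) (Ici x₁) := by
      apply antiOn_of (convex_Ici _)
      · exact fun y hy => (hd y hy).continuousAt.continuousWithinAt
      · intro y hy
        rw [interior_Ici] at hy
        refine ⟨_, hd y (mem_Ici.2 (le_of_lt hy)), ?_⟩
        have := (abs_le.1 (key x₁ y hx₁ (le_of_lt hy))).2
        have hp := exp_pos (-K * y)
        have e : ((-2 * f1 y ^ 2 / y + 2 * (ν ^ 2 / y ^ 2) * (f y * f1 y)) * exp (-K * y) +
          (f y ^ 2 + f1 y ^ 2) * (exp (-K * y) * -K)) = ((-2 * f1 y ^ 2 / y + 2 * (ν ^ 2 / y ^ 2) * (f y * f1 y)) - K * (f y ^ 2 + f1 y ^ 2)) * exp (-K * y) := by ring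
        rw [e]
        exact mul_nonpos_of_nonpos_of_nonneg (by linarith) hp.le
    have := hanti (mem_Ici.2 le_rfl) (mem_Ici.2 hle) hle
    simp only [h0, h1] at this
    have hp := exp_pos (-K * x)
    norm_num at this
    by_contra hcon
    push Not at hcon
    have := mul_pos hcon hp
    simp only [neg_mul] at this
    linarith
  · set K := 2 / x + ν ^ 2 / x ^ 2
    have hd : ∀ y ∈ Icc x x₁, HasDerivAt (fun x => (f x ^ 2 + f1 x ^ 2) * exp (K * x))
        ((-2 * f1 y ^ 2 / y + 2 * (ν ^ 2 / y ^ 2) * (f y * f1 y)) * exp (K * y) +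
          (f y ^ 2 + f1 y ^ 2) * (exp (K * y) * K)) y := by
      intro y hy
      refine (he y (hx.trans_le hy.1)).mul ?_
      refine HasDerivAt.exp ?_
      simpa using (hasDerivAt_id y).const_mul K
    have hmono : MonotoneOn (fun x => (f x ^ 2 + f1 x ^ 2) * exp (K * x)) (Icc x x₁) := by
      apply monoOn_of (convex_Icc _ _)
      · exact fun y hy => (hd y hy).continuousAt.continuousWithinAt
      · intro y hy
        have hy := interior_subset hy
        refine ⟨_, hd y hy, ?_⟩
        have := (abs_le.1 (key x y hx hy.1)).1
        have hp := exp_pos (K * y)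
        have e : ((-2 * f1 y ^ 2 / y + 2 * (ν ^ 2 / y ^ 2) * (f y * f1 y)) * exp (K * y) +
          (f y ^ 2 + f1 y ^ 2) * (exp (K * y) * K)) = ((-2 * f1 y ^ 2 / y + 2 * (ν ^ 2 / y ^ 2) * (f y * f1 y)) + K * (f y ^ 2 + f1 y ^ 2)) * exp (K * y) := by ring
        rw [e]
        exact mul_nonneg (by linarith) hp.le
    have := hmono (left_mem_Icc.2 hle) (right_mem_Icc.2 hle) hle
    simp only [h0, h1] at this
    have hp := exp_pos (K * x)
    norm_num at this
    by_contra hcon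
    push Not at hcon
    have := mul_pos hcon hp
    linarith

lemma BODE.left {ν : ℝ} {f f1 : ℝ → ℝ} (h : BODE ν f f1) (hν : 0 < ν) {M : ℝ}
    (hM : ∀ x, 0 < x → |f x| ≤ M) (hne : ∃ x, 0 < x ∧ f x ≠ 0) :
    (∀ x, 0 < x → x ≤ ν → f x ≠ 0) ∧ 0 ≤ f ν * f1 ν := by
  have hg : MonotoneOn (fun x => f x * (x * f1 x)) (Ioc 0 ν) := by
    apply monoOn_of (convex_Ioc _ _)
    · intro x hx
      exact ((h.hf x hx.1).mul (h.hasDeriv_a hx.1)).continuousAt.continuousWithinAt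
    · intro x hx
      have hx := interior_subset hx
      refine ⟨_, (h.hf x hx.1).mul (h.hasDeriv_a hx.1), ?_⟩
      have hx0 := hx.1
      have hx1 := hx.2
      have e : f1 x * (x * f1 x) + f x * (-((x ^ 2 - ν ^ 2) / x) * f x) =
        x * f1 x ^ 2 + (ν ^ 2 - x ^ 2) / x * f x ^ 2 := by ring
      rw [e]
      have : 0 ≤ (ν ^ 2 - x ^ 2) / x := div_nonneg (by nlinarith) hx0.le
      positivity
  have hg0 : ∀ x ∈ Ioc 0 ν, 0 ≤ f x * (x * f1 x) := by
    intro x hx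
    by_contra hcon
    push Not at hcon
    set c := -(f x * (x * f1 x)) with hc
    have hcpos : 0 < c := by linarith
    have hanti : AntitoneOn (fun y => f y ^ 2 + 2 * c * Real.log y) (Ioc 0 x) := by
      apply antiOn_of (convex_Ioc _ _)
      · intro y hy
        exact (((h.hf y hy.1).pow 2).add ((Real.hasDerivAt_log hy.1.ne').const_mul
          (2 * c))).continuousAt.continuousWithinAt
      · intro y hy
        have hy := interior_subset hy
        refine ⟨_, ((h.hf y hy.1).pow 2).add ((Real.hasDerivAt_log hy.1.ne').const_mul
          (2 * c)), ?_⟩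
        have hy0 := hy.1
        have h1 := hg ⟨hy.1, hy.2.trans hx.2⟩ hx hy.2
        simp only at h1
        have e : ((2:ℕ):ℝ) * f y ^ (2 - 1) * f1 y + 2 * c * y⁻¹ =
          2 * (f y * (y * f1 y) + c) / y := by
          push_cast; field_simp
        rw [e]
        apply div_nonpos_of_nonpos_of_nonneg _ hy0.le
        linarith
    -- choose y very small
    set y := x * exp (-(M ^ 2 + 1) / (2 * c)) with hy
    have hx0 := hx.1
    have hy0 : 0 < y := by positivity
    have hyx : y ≤ x := by
      rw [hy]
      apply mul_le_of_le_one_right hx0.le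
      rw [Real.exp_le_one_iff]
      apply div_nonpos_of_nonpos_of_nonneg <;> nlinarith [sq_nonneg M]
    have h2 := hanti ⟨hy0, hyx⟩ ⟨hx0, le_rfl⟩ hyx
    simp only at h2
    have hl : Real.log y = Real.log x - (M ^ 2 + 1) / (2 * c) := by
      rw [hy, Real.log_mul hx0.ne' (Real.exp_pos _).ne', Real.log_exp]; ring
    rw [hl] at h2
    have h3 : 2 * c * (Real.log x - (M ^ 2 + 1) / (2 * c)) = 2 * c * Real.log x - (M ^ 2 + 1) := by
      field_simp
    rw [h3] at h2
    have h4 : f y ^ 2 ≤ M ^ 2 := by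
      rw [← sq_abs]
      exact pow_le_pow_left₀ (abs_nonneg _) (hM y hy0) 2
    nlinarith [sq_nonneg (f x)]
  refine ⟨?_, ?_⟩
  · intro x hx hxν h0
    have hm : MonotoneOn (fun y => f y ^ 2) (Ioc 0 ν) := by
      apply monoOn_of (convex_Ioc _ _)
      · intro y hy
        exact ((h.hf y hy.1).pow 2).continuousAt.continuousWithinAt
      · intro y hy
        have hy := interior_subset hy
        refine ⟨_, ((h.hf y hy.1).pow 2), ?_⟩
        have h1 := hg0 y hy
        have hy0 := hy.1
        have e : ((2:ℕ):ℝ) * f y ^ (2 - 1) * f1 y = 2 * (f y * (y * f1 y)) / y := by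
          push_cast; field_simp
        rw [e]; positivity
    have hz : ∀ y, 0 < y → y ≤ x → f y = 0 := by
      intro y hy hyx
      have := hm ⟨hy, hyx.trans hxν⟩ ⟨hx, hxν⟩ hyx
      simp only [h0] at this
      have : f y ^ 2 = 0 := le_antisymm (by simpa using this) (sq_nonneg _)
      exact pow_eq_zero_iff (two_ne_zero) |>.1 this
    have hx2 : 0 < x / 2 := by linarith
    have hd : f1 (x / 2) = 0 := by
      have e : f =ᶠ[nhds (x / 2)] fun _ => 0 := by
        filter_upwards [Ioo_mem_nhds (show (0:ℝ) < x / 2 from hx2) (show x / 2 < x by linarith)]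
          with y hy
        exact hz y hy.1 hy.2.le
      have h1 := (h.hf _ hx2).congr_of_eventuallyEq e.symm
      exact h1.unique (hasDerivAt_const _ _)
    obtain ⟨y, hy, hy'⟩ := hne
    exact hy' (h.uniq hx2 (hz _ hx2 (by linarith)) hd y hy)
  · have := hg0 ν ⟨hν, le_rfl⟩
    have e : f ν * (ν * f1 ν) = ν * (f ν * f1 ν) := by ring
    rw [e] at this
    exact nonneg_of_mul_nonneg_right this hν

lemma BODE.mid {ν : ℝ} {f f1 : ℝ → ℝ} (h : BODE ν f f1) (hν : 0 < ν)
    (hpos : 0 < f ν) (hd : 0 ≤ f1 ν) {X : ℝ} (hX : ν < X)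
    (hT : ∀ T, 0 ≤ T → T ≤ X ^ 2 - ν ^ 2 →
      2 * (X ^ 2 - ν ^ 2) ^ 2 * T ≤ 16 * T ^ 2 + 24 * T * ν ^ 2 + 8 * ν ^ 4) :
    ∀ x, ν ≤ x → x ≤ X → 0 < f x := by
  have hcf : ∀ a b, 0 < a → ContinuousOn f (Icc a b) := fun a b ha =>
    h.cont.mono (fun y hy => ha.trans_le hy.1)
  by_contra hcon
  push Not at hcon
  obtain ⟨x, hx1, hx2, hx3⟩ := hcon
  have hZne : ((Icc ν X) ∩ f ⁻¹' {0}).Nonempty := by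
    obtain ⟨y, hy, hy0⟩ := intermediate_value_Icc' hx1 (hcf ν x hν) ⟨hx3, hpos.le⟩
    exact ⟨y, ⟨hy.1, hy.2.trans hx2⟩, hy0⟩
  have hZc : IsCompact ((Icc ν X) ∩ f ⁻¹' {0}) :=
    isCompact_Icc.of_isClosed_subset
      ((hcf ν X hν).preimage_isClosed_of_isClosed isClosed_Icc isClosed_singleton)
      inter_subset_left
  obtain ⟨z, ⟨⟨hz1, hz2⟩, hz0⟩, hzl⟩ := hZc.exists_isLeast hZne
  have hz0 : f z = 0 := hz0
  have hfp : ∀ y, ν ≤ y → y ≤ z → 0 ≤ f y := by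
    intro y hy1 hy2
    by_contra hc
    push Not at hc
    obtain ⟨w, hw, hw0⟩ := intermediate_value_Icc' hy1 (hcf ν y hν) ⟨hc.le, hpos.le⟩
    have := hzl ⟨⟨hw.1, hw.2.trans (hy2.trans hz2)⟩, hw0⟩
    have : y = z := le_antisymm hy2 (this.trans hw.2)
    rw [this, hz0] at hc
    exact lt_irrefl _ hc
  set T₀ := X ^ 2 - ν ^ 2 with hT₀
  have hT₀p : 0 < T₀ := by nlinarith
  set κ := 1 / (2 * T₀ ^ 2) with hκ
  have hκp : 0 < κ := by positivity
  have hκT : κ * (2 * T₀ ^ 2) = 1 := by rw [hκ]; field_simp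
  have hv : ∀ y, HasDerivAt (fun y => 1 - κ * (y ^ 2 - ν ^ 2) ^ 2)
      (-4 * κ * (y ^ 2 - ν ^ 2) * y) y := by
    intro y
    refine ((((hasDerivAt_pow 2 y).sub_const (ν ^ 2)).pow 2).const_mul κ).const_sub 1
      |>.congr_deriv ?_
    push_cast; ring
  have hw : ∀ y, HasDerivAt (fun y => -4 * κ * (y ^ 2 - ν ^ 2) * y ^ 2)
      (-8 * κ * y * (y ^ 2 + (y ^ 2 - ν ^ 2))) y := by
    intro y
    refine ((((hasDerivAt_pow 2 y).sub_const (ν ^ 2)).const_mul (-4 * κ)).mul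
      (hasDerivAt_pow 2 y)).congr_deriv ?_
    push_cast; ring
  have hTy : ∀ y, ν ≤ y → y ≤ z → 0 ≤ y ^ 2 - ν ^ 2 ∧ y ^ 2 - ν ^ 2 ≤ T₀ := by
    intro y h1 h2
    have : y ≤ X := h2.trans hz2
    constructor
    · nlinarith
    · rw [hT₀]; nlinarith
  have hvp : ∀ y, ν ≤ y → y ≤ z → 1 / 2 ≤ 1 - κ * (y ^ 2 - ν ^ 2) ^ 2 := by
    intro y h1 h2
    obtain ⟨h3, h4⟩ := hTy y h1 h2
    have : (y ^ 2 - ν ^ 2) ^ 2 ≤ T₀ ^ 2 := pow_le_pow_left₀ h3 h4 2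
    nlinarith
  have hWd : ∀ y, 0 < y → HasDerivAt (fun y => (y * f1 y) * (1 - κ * (y ^ 2 - ν ^ 2) ^ 2) -
      f y * (-4 * κ * (y ^ 2 - ν ^ 2) * y ^ 2))
      (f y / y * (8 * κ * y ^ 2 * (y ^ 2 + (y ^ 2 - ν ^ 2)) -
        (y ^ 2 - ν ^ 2) * (1 - κ * (y ^ 2 - ν ^ 2) ^ 2))) y := by
    intro y hy
    refine (((h.hasDeriv_a hy).mul (hv y)).sub ((h.hf y hy).mul (hw y))).congr_deriv ?_
    field_simp
    ring
  have hWm : MonotoneOn (fun y => (y * f1 y) * (1 - κ * (y ^ 2 - ν ^ 2) ^ 2) -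
      f y * (-4 * κ * (y ^ 2 - ν ^ 2) * y ^ 2)) (Icc ν z) := by
    apply monoOn_of (convex_Icc _ _)
    · exact fun y hy => (hWd y (hν.trans_le hy.1)).continuousAt.continuousWithinAt
    · intro y hy
      have hy := interior_subset hy
      have hy0 : 0 < y := hν.trans_le hy.1
      refine ⟨_, hWd y hy0, ?_⟩
      apply mul_nonneg (div_nonneg (hfp y hy.1 hy.2) hy0.le)
      obtain ⟨h3, h4⟩ := hTy y hy.1 hy.2
      have h5 := hT _ h3 h4
      set T := y ^ 2 - ν ^ 2 with hTdef
      have h6 : y ^ 2 = T + ν ^ 2 := by rw [hTdef]; ring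
      rw [h6]
      have h7 : T ≤ κ * (16 * T ^ 2 + 24 * T * ν ^ 2 + 8 * ν ^ 4) := by
        have := mul_le_mul_of_nonneg_left h5 hκp.le
        calc T = κ * (2 * T₀ ^ 2 * T) := by rw [← mul_assoc, hκT, one_mul]
          _ ≤ _ := this
      have h8 : 0 ≤ κ * T ^ 3 := by positivity
      nlinarith
  have hW0 : ∀ y, ν ≤ y → y ≤ z → 0 ≤ (y * f1 y) * (1 - κ * (y ^ 2 - ν ^ 2) ^ 2) -
      f y * (-4 * κ * (y ^ 2 - ν ^ 2) * y ^ 2) := by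
    intro y h1 h2
    have := hWm (left_mem_Icc.2 (h1.trans h2)) ⟨h1, h2⟩ h1
    simp only [sub_self] at this
    refine le_trans ?_ this
    norm_num
    positivity
  have hqd : ∀ y ∈ Icc ν z, HasDerivAt (fun y => f y / (1 - κ * (y ^ 2 - ν ^ 2) ^ 2))
      ((f1 y * (1 - κ * (y ^ 2 - ν ^ 2) ^ 2) - f y * (-4 * κ * (y ^ 2 - ν ^ 2) * y)) /
        (1 - κ * (y ^ 2 - ν ^ 2) ^ 2) ^ 2) y := by
    intro y hy
    have := hvp y hy.1 hy.2
    exact (h.hf y (hν.trans_le hy.1)).div (hv y) (by linarith)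
  have hqm : MonotoneOn (fun y => f y / (1 - κ * (y ^ 2 - ν ^ 2) ^ 2)) (Icc ν z) := by
    apply monoOn_of (convex_Icc _ _)
    · exact fun y hy => (hqd y hy).continuousAt.continuousWithinAt
    · intro y hy
      have hy := interior_subset hy
      have hy0 : 0 < y := hν.trans_le hy.1
      refine ⟨_, hqd y hy, div_nonneg ?_ (sq_nonneg _)⟩
      have := hW0 y hy.1 hy.2
      have e : (y * f1 y) * (1 - κ * (y ^ 2 - ν ^ 2) ^ 2) -
        f y * (-4 * κ * (y ^ 2 - ν ^ 2) * y ^ 2) = y * (f1 y * (1 - κ * (y ^ 2 - ν ^ 2) ^ 2) - f y * (-4 * κ * (y ^ 2 - ν ^ 2) * y)) := by ring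
      rw [e] at this
      exact nonneg_of_mul_nonneg_right this hy0
  have := hqm (left_mem_Icc.2 hz1) (right_mem_Icc.2 hz1) hz1
  simp only [hz0, sub_self] at this
  norm_num at this
  linarith


lemma exp_lift {ν x₀ : ℝ} (hx₀ : ν < x₀) {z z' : ℝ → ℂ}
    (hz : ∀ x, ν < x → HasDerivAt z (z' x) x) (hz' : ContinuousOn z' (Ioi ν))
    (hne : ∀ x, ν < x → z x ≠ 0) :
    ∃ L : ℝ → ℂ, L x₀ = Complex.log (z x₀) ∧
      ∀ x, ν < x → HasDerivAt L (z' x / z x) x ∧ Complex.exp (L x) = z x := by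
  have hq : ContinuousOn (fun x => z' x / z x) (Ioi ν) :=
    hz'.div (fun x hx => (hz x hx).continuousAt.continuousWithinAt) hne
  have hL : ∀ x, ν < x → HasDerivAt
      (fun x => Complex.log (z x₀) + ∫ t in x₀..x, z' t / z t) (z' x / z x) x := by
    intro x hx
    apply HasDerivAt.const_add
    apply intervalIntegral.integral_hasDerivAt_right
    · apply ContinuousOn.intervalIntegrable
      apply hq.mono
      intro y hy
      rw [mem_uIcc] at hy
      rw [mem_Ioi]
      rcases hy with hy | hy <;> linarith [hy.1]
    · exact hq.stronglyMeasurableAtFilter isOpen_Ioi x hx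
    · exact hq.continuousAt (Ioi_mem_nhds hx)
  refine ⟨_, ?_, fun x hx => ⟨hL x hx, ?_⟩⟩
  · simp
  · set L := fun x => Complex.log (z x₀) + ∫ t in x₀..x, z' t / z t with hLdef
    have hd : ∀ y, ν < y → HasDerivAt (fun y => z y * Complex.exp (-L y)) 0 y := by
      intro y hy
      have h0 := hne y hy
      refine ((hz y hy).mul ((hL y hy).neg.cexp)).congr_deriv ?_
      field_simp
      simp
    have hc := isOpen_Ioi.is_const_of_deriv_eq_zero (isPreconnected_Ioi (a := ν))
      (f := fun y => z y * Complex.exp (-L y))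
      (fun y hy => (hd y hy).differentiableAt.differentiableWithinAt)
      (fun y hy => (hd y hy).deriv) (show x ∈ Ioi ν from hx) (show x₀ ∈ Ioi ν from hx₀)
    have h1 : L x₀ = Complex.log (z x₀) := by simp [hLdef]
    rw [h1, Complex.exp_neg, Complex.exp_neg, Complex.exp_log (hne _ hx₀),
      mul_inv_cancel₀ (hne _ hx₀)] at hc
    have h2 := Complex.exp_ne_zero (L x)
    field_simp at hc
    exact hc.symm

/-- the Pruefer angle -/
lemma BODE.angle {ν : ℝ} {f f1 : ℝ → ℝ} (h : BODE ν f f1) (hν : 0 < ν)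
    (hne : ∃ x, 0 < x ∧ f x ≠ 0) {X : ℝ} (hX : ν < X) (hfX : 0 < f X) :
    ∃ θ : ℝ → ℝ, (0 < θ X ∧ θ X < π) ∧
      (∀ x, ν < x → HasDerivAt θ (om ν x / x + x / om ν x ^ 2 * (sin (θ x) * cos (θ x))) x) ∧
      (∀ x, ν < x → (f x = 0 ↔ sin (θ x) = 0)) := by
  set z : ℝ → ℂ := fun x => ((x * f1 x : ℝ) : ℂ) + ((om ν x * f x : ℝ) : ℂ) * Complex.I with hzdef
  set a' : ℝ → ℝ := fun x => -((x ^ 2 - ν ^ 2) / x) * f x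
  set b' : ℝ → ℝ := fun x => x / om ν x * f x + om ν x * f1 x
  set z' : ℝ → ℂ := fun x => ((a' x : ℝ) : ℂ) + ((b' x : ℝ) : ℂ) * Complex.I with hz'def
  have hz : ∀ x, ν < x → HasDerivAt z (z' x) x := by
    intro x hx
    have hx0 := hν.trans hx
    exact (h.hasDeriv_a hx0).ofReal_comp.add
      ((((om_hasDeriv hν.le hx).mul (h.hf x hx0)).ofReal_comp).mul_const Complex.I)
  have hsub : Ioi ν ⊆ Ioi (0:ℝ) := fun x hx => hν.trans hx
  have hcf := h.cont.mono hsub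
  have hcf1 := h.cont1.mono hsub
  have hom := (om_cont ν).continuousOn (s := Ioi ν)
  have hz' : ContinuousOn z' (Ioi ν) := by
    have h1 : ContinuousOn a' (Ioi ν) := by
      apply ContinuousOn.mul _ hcf
      apply ContinuousOn.neg
      apply ContinuousOn.div (by fun_prop) continuousOn_id
      exact fun x hx => (hν.trans hx).ne'
    have h2 : ContinuousOn b' (Ioi ν) := by
      apply ContinuousOn.add _ (hom.mul hcf1)
      apply ContinuousOn.mul _ hcf
      apply ContinuousOn.div continuousOn_id hom
      exact fun x hx => (om_pos hν.le hx).ne'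
    exact (Complex.continuous_ofReal.comp_continuousOn h1).add
      ((Complex.continuous_ofReal.comp_continuousOn h2).mul continuousOn_const)
  have hzne : ∀ x, ν < x → z x ≠ 0 := by
    intro x hx h0
    have hx0 := hν.trans hx
    have ho := om_pos hν.le hx
    have h1 : x * f1 x = 0 := by
      have := congrArg Complex.re h0
      simpa [hzdef] using this
    have h2 : om ν x * f x = 0 := by
      have := congrArg Complex.im h0
      simpa [hzdef] using this
    obtain ⟨y, hy, hy'⟩ := hne
    refine hy' (h.uniq hx0 ?_ ?_ y hy)
    · simpa [ho.ne'] using h2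
    · simpa [hx0.ne'] using h1
  obtain ⟨L, hL0, hL⟩ := exp_lift hX hz hz' hzne
  have hre : ∀ x, ν < x → Real.exp (L x).re * cos (L x).im = x * f1 x := by
    intro x hx
    have := congrArg Complex.re (hL x hx).2
    rw [Complex.exp_re] at this
    simpa [hzdef] using this
  have him : ∀ x, ν < x → Real.exp (L x).re * sin (L x).im = om ν x * f x := by
    intro x hx
    have := congrArg Complex.im (hL x hx).2
    rw [Complex.exp_im] at this
    simpa [hzdef] using this
  refine ⟨fun x => (L x).im, ?_, ?_, ?_⟩
  · simp only [hL0, Complex.log_im]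
    have hXo := om_pos hν.le hX
    have hzim : 0 < (z X).im := by
      simp [hzdef]; positivity
    have h1 : 0 ≤ Complex.arg (z X) := Complex.arg_nonneg_iff.2 hzim.le
    refine ⟨lt_of_le_of_ne h1 ?_, lt_of_le_of_ne (Complex.arg_le_pi _) ?_⟩
    · intro h2
      have := (Complex.arg_eq_zero_iff.1 h2.symm).2
      linarith
    · intro h2
      have := (Complex.arg_eq_pi_iff.1 h2).2
      linarith
  · intro x hx
    have hx0 := hν.trans hx
    have ho := om_pos hν.le hx
    have hd : HasDerivAt (fun x => (L x).im) (z' x / z x).im x :=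
      (Complex.imCLM.hasFDerivAt.comp_hasDerivAt x (hL x hx).1)
    refine hd.congr_deriv ?_
    have hr := hre x hx
    have hi := him x hx
    have hsq := om_sq hν.le hx.le
    set ρ := Real.exp (L x).re
    have hρ : 0 < ρ := Real.exp_pos _
    set s := sin (L x).im
    set c := cos (L x).im
    have hsc : s ^ 2 + c ^ 2 = 1 := Real.sin_sq_add_cos_sq _
    have hzx : z x = (ρ * c : ℝ) + (ρ * s : ℝ) * Complex.I := by
      rw [hr, hi]
    have hf : f x = ρ * s / om ν x := by rw [hi]; field_simp
    have hf1 : f1 x = ρ * c / x := by rw [hr]; field_simp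
    have hns : Complex.normSq (z x) = ρ ^ 2 := by
      rw [hzx, Complex.normSq_add_mul_I]
      linear_combination ρ ^ 2 * hsc
    have e1 : (z x).re = ρ * c := by rw [hzx]; simp
    have e2 : (z x).im = ρ * s := by rw [hzx]; simp
    have e3 : (z' x).re = a' x := by simp [hz'def]
    have e4 : (z' x).im = b' x := by simp [hz'def]
    rw [Complex.div_im, hns, e1, e2, e3, e4]
    simp only [a', b']
    rw [hf, hf1, ← hsq]
    field_simp
    linear_combination (om ν x) ^ 3 * hsc
  · intro x hx
    have ho := om_pos hν.le hx
    have hi := him x hx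
    have hρ := Real.exp_pos (L x).re
    constructor
    · intro h0
      rw [h0, mul_zero] at hi
      exact (mul_eq_zero.1 hi).resolve_left hρ.ne'
    · intro h0
      simp only at h0
      rw [h0, mul_zero] at hi
      exact (mul_eq_zero.1 hi.symm).resolve_left ho.ne'


/-- auxiliary error function -/
noncomputable def Gf (ν x : ℝ) : ℝ := 1 / om ν x + ν ^ 2 / (3 * om ν x ^ 3)

lemma om3_hasDeriv {ν x : ℝ} (hν : 0 < ν) (hx : ν < x) :
    HasDerivAt (fun x => om ν x ^ 3) (3 * om ν x * x) x := by
  have ho := om_pos hν.le hx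
  refine ((om_hasDeriv hν.le hx).pow 3).congr_deriv ?_
  push_cast
  field_simp

lemma Ef_hasDeriv {ν x : ℝ} (hν : 0 < ν) (hx : ν < x) :
    HasDerivAt (Ef ν) (-(x * (x ^ 2 + 2 * ν ^ 2)) / om ν x ^ 5) x := by
  have ho := om_pos hν.le hx
  have hsq := om_sq hν.le hx.le
  refine ((hasDerivAt_pow 2 x).div (om3_hasDeriv hν hx) (by positivity)).congr_deriv ?_
  have h2 : ν ^ 2 = x ^ 2 - om ν x ^ 2 := by linarith
  rw [h2]
  push_cast
  field_simp
  ring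

lemma Gf_hasDeriv {ν x : ℝ} (hν : 0 < ν) (hx : ν < x) :
    HasDerivAt (Gf ν) (-x ^ 3 / om ν x ^ 5) x := by
  have ho := om_pos hν.le hx
  have hsq := om_sq hν.le hx.le
  refine (((hasDerivAt_const x (1:ℝ)).div (om_hasDeriv hν.le hx) ho.ne').add
    ((hasDerivAt_const x (ν ^ 2)).div ((om3_hasDeriv hν hx).const_mul 3)
      (by positivity))).congr_deriv ?_
  have h2 : ν ^ 2 = x ^ 2 - om ν x ^ 2 := by linarith
  rw [h2]
  push_cast
  field_simp
  ring

lemma Gf_le {ν x : ℝ} (hν : 0 < ν) (hx : ν < x) : Gf ν x ≤ Ef ν x := by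
  have ho := om_pos hν.le hx
  have hsq := om_sq hν.le hx.le
  have h2 : x ^ 2 = om ν x ^ 2 + ν ^ 2 := by linarith
  unfold Gf Ef
  rw [h2, add_div]
  have : om ν x ^ 2 / om ν x ^ 3 = 1 / om ν x := by field_simp
  rw [this]
  gcongr
  nlinarith [pow_pos ho 3]

lemma Gf_nonneg {ν x : ℝ} (hν : 0 < ν) (hx : ν < x) : 0 ≤ Gf ν x := by
  have ho := om_pos hν.le hx
  unfold Gf; positivity

open Filter Topology in
lemma Ef_tendsto {ν : ℝ} (hν : 0 < ν) : Tendsto (Ef ν) atTop (𝓝 0) := by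
  have h8 : Tendsto (fun x : ℝ => 8 / x) atTop (𝓝 0) := tendsto_const_nhds.div_atTop tendsto_id
  refine squeeze_zero' ?_ ?_ h8
  · filter_upwards [eventually_gt_atTop ν] with x hx using (Ef_pos hν hx).le
  · filter_upwards [eventually_ge_atTop (2 * ν)] with x hx
    have hxν : ν < x := by linarith
    have hx0 : 0 < x := by linarith
    have hsq := om_sq hν.le hxν.le
    have ho := om_pos hν.le hxν
    have h2 : x / 2 ≤ om ν x := by
      apply Real.le_sqrt_of_sq_le; nlinarith
    have h3 : (x / 2) ^ 3 ≤ om ν x ^ 3 := pow_le_pow_left₀ (by positivity) h2 3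
    unfold Ef
    rw [div_le_div_iff₀ (by positivity) hx0]
    nlinarith

open Filter Topology in
lemma Sf_asym {ν : ℝ} (hν : 0 < ν) :
    Tendsto (fun x => Sf ν x - (x - ν * π / 2)) atTop (𝓝 0) := by
  have h1 : Tendsto (fun x => om ν x - x) atTop (𝓝 0) := by
    have h8 : Tendsto (fun x : ℝ => -ν ^ 2 / x) atTop (𝓝 0) :=
      tendsto_const_nhds.div_atTop tendsto_id
    refine tendsto_of_tendsto_of_tendsto_of_le_of_le' h8 tendsto_const_nhds ?_ ?_
    · filter_upwards [eventually_gt_atTop ν] with x hx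
      have hx0 : 0 < x := hν.trans hx
      have hsq := om_sq hν.le hx.le
      have ho := om_pos hν.le hx
      rw [div_le_iff₀ hx0]
      nlinarith
    · filter_upwards [eventually_gt_atTop ν] with x hx
      have hx0 : 0 < x := hν.trans hx
      have hsq := om_sq hν.le hx.le
      have ho := om_pos hν.le hx
      nlinarith
  have h2 : Tendsto (fun x => arccos (ν / x)) atTop (𝓝 (π / 2)) := by
    have : Tendsto (fun x : ℝ => ν / x) atTop (𝓝 0) := tendsto_const_nhds.div_atTop tendsto_id
    have h3 := (Real.continuous_arccos.tendsto 0).comp this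
    rwa [Real.arccos_zero] at h3
  have h3 := h1.sub ((h2.sub_const (π / 2)).const_mul ν)
  simp only [sub_self, mul_zero] at h3
  refine h3.congr (fun x => ?_)
  unfold Sf; ring

lemma X_exists {ν : ℝ} (hν : 1 / 2 ≤ ν) : ∃ X, ν < X ∧ Ef ν X = 3 / 2 ∧
    ∀ T, 0 ≤ T → T ≤ X ^ 2 - ν ^ 2 →
      2 * (X ^ 2 - ν ^ 2) ^ 2 * T ≤ 16 * T ^ 2 + 24 * T * ν ^ 2 + 8 * ν ^ 4 := by
  have hν0 : 0 < ν := by linarith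
  have hiv := intermediate_value_Icc (show (0:ℝ) ≤ 1 + ν by linarith)
    (f := fun w => 3 / 2 * w ^ 3 - w ^ 2 - ν ^ 2) (by fun_prop)
  obtain ⟨w, hw, hw0⟩ := hiv (show (0:ℝ) ∈ _ from ⟨by norm_num; positivity, by
    have : 3 / 2 * (1 + ν) ^ 3 - (1 + ν) ^ 2 - ν ^ 2 = 1 / 2 + 5 / 2 * ν + 5 / 2 * ν ^ 2 + 3 / 2 * ν ^ 3 := by ring
    simp only [this]; positivity⟩)
  simp only at hw0
  have hwne : w ≠ 0 := by
    rintro rfl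
    norm_num at hw0
    exact hν0.ne' hw0
  have hwp : 0 < w := lt_of_le_of_ne hw.1 hwne.symm
  have hn : ν ^ 2 = 3 / 2 * w ^ 3 - w ^ 2 := by linarith
  have hXsq : Real.sqrt (w ^ 2 + ν ^ 2) ^ 2 = w ^ 2 + ν ^ 2 := Real.sq_sqrt (by positivity)
  refine ⟨Real.sqrt (w ^ 2 + ν ^ 2), ?_, ?_, ?_⟩
  · apply Real.lt_sqrt_of_sq_lt; nlinarith
  · unfold Ef om
    rw [hXsq, add_sub_cancel_right, Real.sqrt_sq hwp.le, hn]
    field_simp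
    ring
  · rw [hXsq, add_sub_cancel_right]
    intro T hT0 hT
    have hn4 : 1 / 4 ≤ ν ^ 2 := by nlinarith
    have h4 : ν ^ 4 = (ν ^ 2) ^ 2 := by ring
    rw [h4]
    have hw8 : 4 / 5 ≤ w := by
      by_contra hc
      push Not at hc
      have h1 : w ^ 2 * (3 / 2 * w - 1) ≤ w ^ 2 * (1 / 5) := by
        apply mul_le_mul_of_nonneg_left _ (by positivity); linarith
      nlinarith
    rcases le_total w (4 / 3) with hc | hc
    · have h1 : w ^ 4 ≤ 12 * ν ^ 2 := by
        rw [hn]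
        have : 0 ≤ w ^ 2 * (18 * w - 12 - w ^ 2) := by
          apply mul_nonneg (by positivity); nlinarith
        nlinarith
      have h2 : w ^ 4 * T ≤ 12 * ν ^ 2 * T := mul_le_mul_of_nonneg_right h1 hT0
      nlinarith [sq_nonneg T, sq_nonneg (ν ^ 2)]
    · have h1 : 3 / 4 * w ^ 3 ≤ ν ^ 2 := by
        rw [hn]
        have : 0 ≤ w ^ 2 * (3 / 4 * w - 1) := by
          apply mul_nonneg (by positivity); linarith
        nlinarith
      have h2 : (3 / 4 * w ^ 3) ^ 2 ≤ (ν ^ 2) ^ 2 := pow_le_pow_left₀ (by positivity) h1 2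
      have h3 : w ^ 4 * T ≤ w ^ 4 * w ^ 2 := mul_le_mul_of_nonneg_left hT (by positivity)
      have h5 : 0 ≤ T * ν ^ 2 := by positivity
      nlinarith [sq_nonneg T]


section prufer

variable {ν : ℝ} {θ : ℝ → ℝ}

lemma U_anti (hν : 0 < ν)
    (hθ : ∀ x, ν < x → HasDerivAt θ (om ν x / x + x / om ν x ^ 2 * (sin (θ x) * cos (θ x))) x) :
    AntitoneOn (fun x => θ x - Sf ν x + Ef ν x / 2 * cos (θ x) ^ 2) (Ioi ν) := by
  have hd : ∀ x, ν < x → HasDerivAt (fun x => θ x - Sf ν x + Ef ν x / 2 * cos (θ x) ^ 2)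
      (-(x * (x ^ 2 + 2 * ν ^ 2)) / om ν x ^ 5 / 2 * cos (θ x) ^ 2 -
        x ^ 3 / om ν x ^ 5 * (sin (θ x) * cos (θ x)) ^ 2) x := by
    intro x hx
    have hx0 := hν.trans hx
    have ho := om_pos hν.le hx
    refine (((hθ x hx).sub (Sf_hasDeriv hν hx)).add
      (((Ef_hasDeriv hν hx).div_const 2).mul ((hθ x hx).cos.pow 2))).congr_deriv ?_
    simp only [Pi.pow_apply, Ef]
    push_cast
    field_simp
    ring
  apply antiOn_of (convex_Ioi _)
  · exact fun x hx => (hd x hx).continuousAt.continuousWithinAt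
  · intro x hx
    rw [interior_Ioi] at hx
    have hx0 := hν.trans hx
    have ho := om_pos hν.le hx
    refine ⟨_, hd x hx, ?_⟩
    have h1 : 0 ≤ (x * (x ^ 2 + 2 * ν ^ 2)) / om ν x ^ 5 / 2 * cos (θ x) ^ 2 := by positivity
    have h2 : 0 ≤ x ^ 3 / om ν x ^ 5 * (sin (θ x) * cos (θ x)) ^ 2 := by positivity
    have e : -(x * (x ^ 2 + 2 * ν ^ 2)) / om ν x ^ 5 / 2 * cos (θ x) ^ 2 =
      -((x * (x ^ 2 + 2 * ν ^ 2)) / om ν x ^ 5 / 2 * cos (θ x) ^ 2) := by ring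
    rw [e]; linarith

lemma V_mono (hν : 0 < ν)
    (hθ : ∀ x, ν < x → HasDerivAt θ (om ν x / x + x / om ν x ^ 2 * (sin (θ x) * cos (θ x))) x) :
    MonotoneOn (fun x => θ x - Sf ν x - Ef ν x / 2 * sin (θ x) ^ 2 - Gf ν x / 4) (Ioi ν) := by
  have hd : ∀ x, ν < x → HasDerivAt
      (fun x => θ x - Sf ν x - Ef ν x / 2 * sin (θ x) ^ 2 - Gf ν x / 4)
      ((x * (x ^ 2 + 2 * ν ^ 2)) / om ν x ^ 5 / 2 * sin (θ x) ^ 2 +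
        x ^ 3 / om ν x ^ 5 * (1 / 4 - (sin (θ x) * cos (θ x)) ^ 2)) x := by
    intro x hx
    have hx0 := hν.trans hx
    have ho := om_pos hν.le hx
    refine ((((hθ x hx).sub (Sf_hasDeriv hν hx)).sub
      (((Ef_hasDeriv hν hx).div_const 2).mul ((hθ x hx).sin.pow 2))).sub
      ((Gf_hasDeriv hν hx).div_const 4)).congr_deriv ?_
    simp only [Pi.pow_apply, Ef]
    push_cast
    field_simp
    ring
  apply monoOn_of (convex_Ioi _)
  · exact fun x hx => (hd x hx).continuousAt.continuousWithinAt
  · intro x hx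
    rw [interior_Ioi] at hx
    have hx0 := hν.trans hx
    have ho := om_pos hν.le hx
    refine ⟨_, hd x hx, ?_⟩
    have h3 : 0 ≤ 1 / 4 - (sin (θ x) * cos (θ x)) ^ 2 := by
      have := Real.sin_sq_add_cos_sq (θ x)
      nlinarith [sq_nonneg (sin (θ x) ^ 2 - cos (θ x) ^ 2)]
    have h4 : 0 < x ^ 3 / om ν x ^ 5 := by positivity
    have := mul_nonneg h4.le h3
    positivity

open Filter Topology in
lemma theta_lim (hν : 0 < ν)
    (hθ : ∀ x, ν < x → HasDerivAt θ (om ν x / x + x / om ν x ^ 2 * (sin (θ x) * cos (θ x))) x)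
    {X : ℝ} (hX : ν < X) :
    ∃ c, Tendsto (fun x => θ x - Sf ν x) atTop (𝓝 c) ∧
      ∀ x, ν < x → c - Ef ν x / 2 ≤ θ x - Sf ν x ∧ θ x - Sf ν x ≤ c + 3 / 4 * Ef ν x := by
  set U := fun x => θ x - Sf ν x + Ef ν x / 2 * cos (θ x) ^ 2 with hU
  set V := fun x => θ x - Sf ν x - Ef ν x / 2 * sin (θ x) ^ 2 - Gf ν x / 4 with hV
  have hUa : AntitoneOn U (Ioi ν) := U_anti hν hθ
  have hVm : MonotoneOn V (Ioi ν) := V_mono hν hθ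
  have hVU : ∀ x, ν < x → V x ≤ U x := by
    intro x hx
    have h1 := Gf_nonneg hν hx
    have h2 := Ef_pos hν hx
    have h3 : 0 ≤ Ef ν x / 2 * cos (θ x) ^ 2 := by positivity
    have h4 : 0 ≤ Ef ν x / 2 * sin (θ x) ^ 2 := by positivity
    simp only [hU, hV]; linarith
  have hmax : ∀ x : ℝ, ν < max X x := fun x => hX.trans_le (le_max_left _ _)
  have hanti : Antitone (fun x => U (max X x)) := by
    intro x y hxy
    exact hUa (hmax x) (hmax y) (max_le_max le_rfl hxy)
  have hbdd : BddBelow (range fun x => U (max X x)) := by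
    refine ⟨V X, ?_⟩
    rintro _ ⟨x, rfl⟩
    exact (hVm hX (hmax x) (le_max_left _ _)).trans (hVU _ (hmax x))
  have ht := tendsto_atTop_ciInf hanti hbdd
  set c := ⨅ x, U (max X x)
  have hUt : Tendsto U atTop (𝓝 c) := by
    refine ht.congr' ?_
    filter_upwards [eventually_ge_atTop X] with x hx
    rw [max_eq_right hx]
  have hE := Ef_tendsto hν
  have hEc : ∀ g : ℝ → ℝ, (∀ x, 0 ≤ g x ∧ g x ≤ 1) → Tendsto (fun x => Ef ν x / 2 * g x) atTop (𝓝 0) := by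
    intro g hg
    refine squeeze_zero' ?_ ?_ hE
    · filter_upwards [eventually_gt_atTop ν] with x hx
      have := Ef_pos hν hx
      have := (hg x).1
      positivity
    · filter_upwards [eventually_gt_atTop ν] with x hx
      have := Ef_pos hν hx
      have := (hg x).1
      have := (hg x).2
      nlinarith
  have hG : Tendsto (Gf ν) atTop (𝓝 0) := by
    refine squeeze_zero' ?_ ?_ hE
    · filter_upwards [eventually_gt_atTop ν] with x hx using Gf_nonneg hν hx
    · filter_upwards [eventually_gt_atTop ν] with x hx using Gf_le hν hx
  have hcos := hEc (fun x => cos (θ x) ^ 2) (fun x => ⟨sq_nonneg _, Real.cos_sq_le_one _⟩)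
  have hsin := hEc (fun x => sin (θ x) ^ 2) (fun x => ⟨sq_nonneg _, Real.sin_sq_le_one _⟩)
  have hlim : Tendsto (fun x => θ x - Sf ν x) atTop (𝓝 c) := by
    have := hUt.sub hcos
    rw [sub_zero] at this
    refine this.congr (fun x => ?_)
    simp only [hU]; ring
  have hVt : Tendsto V atTop (𝓝 c) := by
    have := (hlim.sub hsin).sub (hG.div_const 4)
    simpa using this
  refine ⟨c, hlim, fun x hx => ?_⟩
  have h1 : c ≤ U x := by
    refine le_of_tendsto hUt ?_
    filter_upwards [eventually_ge_atTop x] with y hy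
    exact hUa hx (hx.trans_le hy) hy
  have h2 : V x ≤ c := by
    refine ge_of_tendsto hVt ?_
    filter_upwards [eventually_ge_atTop x] with y hy
    exact hVm hx (hx.trans_le hy) hy
  have hEp := Ef_pos hν hx
  have hGE := Gf_le hν hx
  have h3 : Ef ν x / 2 * cos (θ x) ^ 2 ≤ Ef ν x / 2 * 1 :=
    mul_le_mul_of_nonneg_left (Real.cos_sq_le_one _) (by positivity)
  have h4 : Ef ν x / 2 * sin (θ x) ^ 2 ≤ Ef ν x / 2 * 1 :=
    mul_le_mul_of_nonneg_left (Real.sin_sq_le_one _) (by positivity)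
  simp only [hU, hV] at h1 h2
  constructor <;> linarith

open Filter Topology in
lemma theta_lim_val (hν : 0 < ν) {f : ℝ → ℝ}
    (hθ : ∀ x, ν < x → HasDerivAt θ (om ν x / x + x / om ν x ^ 2 * (sin (θ x) * cos (θ x))) x)
    (hz : ∀ x, ν < x → (f x = 0 ↔ sin (θ x) = 0))
    (hasym : Tendsto (fun x => x * f x ^ 2 - (1 / π) * (1 + sin (2 * x - ν * π))) atTop (𝓝 0))
    {c : ℝ} (hc : Tendsto (fun x => θ x - Sf ν x) atTop (𝓝 c)) : sin (2 * c) = 1 := by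
  have hS := Sf_asym hν
  have h1 : Tendsto (fun x => (2 * θ x - 2 * c) - (2 * x - ν * π)) atTop (𝓝 0) := by
    have := (hc.add hS).const_mul 2
    have := this.sub_const (2 * c)
    simp only [add_zero, sub_self] at this
    refine this.congr (fun x => ?_)
    ring
  have h2 : Tendsto (fun x => sin (2 * θ x - 2 * c) - sin (2 * x - ν * π)) atTop (𝓝 0) := by
    rw [tendsto_zero_iff_abs_tendsto_zero] at h1 ⊢
    refine squeeze_zero (fun x => abs_nonneg _) (fun x => ?_) h1
    exact Real.abs_sin_sub_sin_le _ _
  have h3 : Tendsto (fun x => x * f x ^ 2 - (1 / π) * (1 + sin (2 * θ x - 2 * c))) atTop (𝓝 0) := by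
    have := hasym.sub (h2.const_mul (1 / π))
    simp only [mul_zero, sub_self] at this
    refine this.congr (fun x => ?_)
    ring
  have hStop : Tendsto (fun x => θ x) atTop atTop := by
    have hh : Tendsto (fun x : ℝ => x) atTop atTop := tendsto_id
    have := (hc.add hS).add_atTop hh
    have := tendsto_atTop_add_const_right atTop (-(ν * π / 2)) this
    refine this.congr (fun x => ?_)
    ring
  have hfreq : ∃ᶠ x in atTop, ν < x ∧ ∃ k : ℤ, θ x = k * π := by
    rw [frequently_atTop]
    intro a
    set b := max a (ν + 1)
    have hb : ν < b := lt_of_lt_of_le (by linarith) (le_max_right a (ν + 1))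
    obtain ⟨k, hk⟩ := exists_int_gt (θ b / π)
    rw [div_lt_iff₀ pi_pos] at hk
    obtain ⟨y, hy1, hy2⟩ := ((hStop.eventually_ge_atTop (k * π)).and (eventually_ge_atTop b)).exists
    have hcont : ContinuousOn θ (Icc b y) := fun t ht =>
      (hθ t (hb.trans_le ht.1)).continuousAt.continuousWithinAt
    obtain ⟨t, ht, ht'⟩ := intermediate_value_Icc hy2 hcont ⟨hk.le, hy1⟩
    exact ⟨t, (le_max_left a _).trans ht.1, hb.trans_le ht.1, k, ht'⟩
  have hconst : ∃ᶠ x in atTop, x * f x ^ 2 - (1 / π) * (1 + sin (2 * θ x - 2 * c)) =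
      -(1 / π) * (1 - sin (2 * c)) := by
    refine hfreq.mono ?_
    rintro x ⟨hx, k, hk⟩
    have : sin (θ x) = 0 := by rw [hk]; exact Real.sin_int_mul_pi k
    rw [(hz x hx).2 this, hk]
    have : 2 * (k * π) - 2 * c = -(2 * c) + k * (2 * π) := by ring
    rw [this, Real.sin_add_int_mul_two_pi, Real.sin_neg]
    ring
  have hzero : -(1 / π) * (1 - sin (2 * c)) = 0 := by
    by_contra hne
    have h4 := h3.eventually_ne (Ne.symm hne)
    exact hconst (h4.mono (fun x hx => hx))
  have hπ := pi_pos
  have : (1 / π) ≠ 0 := by positivity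
  have h5 := (mul_eq_zero.1 hzero).resolve_left (neg_ne_zero.2 this)
  linarith

end prufer

open Filter Topology in
/-- Main uniform statement about a bounded solution of Bessel's equation. -/
theorem BODE.main {ν : ℝ} {f f1 : ℝ → ℝ} (hν : 1 / 2 ≤ ν) (h : BODE ν f f1) {M : ℝ}
    (hM : ∀ x, 0 < x → |f x| ≤ M)
    (hasym : Tendsto (fun x => x * f x ^ 2 - (1 / π) * (1 + sin (2 * x - ν * π))) atTop (𝓝 0)) :
    ∃ X, ν < X ∧ Ef ν X = 3 / 2 ∧ (∀ x, 0 < x → x ≤ X → f x ≠ 0) ∧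
      ∃ θ : ℝ → ℝ, (0 < θ X ∧ θ X < π) ∧
      (∀ x, ν < x → HasDerivAt θ (om ν x / x + x / om ν x ^ 2 * (sin (θ x) * cos (θ x))) x) ∧
      (∀ x, ν < x → (f x = 0 ↔ sin (θ x) = 0)) ∧
      (∀ x, ν < x → |θ x - Sf ν x - π / 4| ≤ 3 / 4 * Ef ν x) := by
  have hν0 : 0 < ν := by linarith
  have hne : ∃ x, 0 < x ∧ f x ≠ 0 := by
    by_contra hcon
    push Not at hcon
    have h1 := hasym.eventually (Metric.ball_mem_nhds 0 (show (0:ℝ) < 1 / π by positivity))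
    obtain ⟨a, ha⟩ := eventually_atTop.1 h1
    obtain ⟨k, hk⟩ := exists_nat_gt (max a 0)
    have hkk : (k:ℝ) ≤ ν * π / 2 + k * π := by
      have : (k:ℝ) * 1 ≤ k * π := mul_le_mul_of_nonneg_left (by linarith [Real.pi_gt_three]) (by positivity)
      have : 0 ≤ ν * π / 2 := by positivity
      linarith
    have h2 := ha (ν * π / 2 + k * π) ((le_max_left a 0).trans (hk.le.trans hkk))
    rw [hcon _ (lt_of_lt_of_le (lt_of_le_of_lt (le_max_right a 0) hk) hkk)] at h2
    have e : 2 * (ν * π / 2 + k * π) - ν * π = 0 + k * (2 * π) := by ring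
    rw [e, Real.sin_add_nat_mul_two_pi] at h2
    simp [abs_of_pos pi_pos] at h2
  obtain ⟨X, hX, hE, hT⟩ := X_exists hν
  -- wlog sign
  have key : ∀ (f f1 : ℝ → ℝ), BODE ν f f1 → (∀ x, 0 < x → |f x| ≤ M) →
      (∃ x, 0 < x ∧ f x ≠ 0) → 0 < f ν →
      (Tendsto (fun x => x * f x ^ 2 - (1 / π) * (1 + sin (2 * x - ν * π))) atTop (𝓝 0)) →
      (∀ x, 0 < x → x ≤ X → f x ≠ 0) ∧
      ∃ θ : ℝ → ℝ, (0 < θ X ∧ θ X < π) ∧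
      (∀ x, ν < x → HasDerivAt θ (om ν x / x + x / om ν x ^ 2 * (sin (θ x) * cos (θ x))) x) ∧
      (∀ x, ν < x → (f x = 0 ↔ sin (θ x) = 0)) ∧
      (∀ x, ν < x → |θ x - Sf ν x - π / 4| ≤ 3 / 4 * Ef ν x) := by
    clear hasym hne hM h
    intro f f1 h hM hne hpos hasym
    obtain ⟨hl, hd⟩ := h.left hν0 hM hne
    have hm := h.mid hν0 hpos (nonneg_of_mul_nonneg_right hd hpos) hX hT
    refine ⟨fun x hx hxX => ?_, ?_⟩
    · rcases le_total x ν with hc | hc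
      · exact hl x hx hc
      · exact (hm x hc hxX).ne'
    obtain ⟨θ, hθX, hθd, hθz⟩ := h.angle hν0 hne hX (hm X hX.le le_rfl)
    refine ⟨θ, hθX, hθd, hθz, ?_⟩
    obtain ⟨c, hc, hcb⟩ := theta_lim hν0 hθd hX
    have hs := theta_lim_val hν0 hθd hθz hasym hc
    have hbX := hcb X hX
    have hSX := Sf_le_inv hν0 hX
    have hS0 := Sf_nonneg hν0 hX.le
    rw [hE] at hbX hSX
    have hπ3 := Real.pi_gt_three
    have hc1 : c < 5 * π / 4 := by linarith [hbX.1, hθX.2]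
    have hc2 : -(3 * π / 4) < c := by linarith [hbX.2, hθX.1]
    have hceq : c = π / 4 := by
      have : cos (2 * c - π / 2) = 1 := by rw [Real.cos_sub_pi_div_two, hs]
      obtain ⟨n, hn⟩ := (Real.cos_eq_one_iff _).1 this
      have h1 : (n:ℝ) < 1 := by nlinarith
      have h2 : -1 < (n:ℝ) := by nlinarith
      have h3 : n < 1 := by exact_mod_cast h1
      have h4 : -1 < n := by exact_mod_cast h2
      have : n = 0 := by omega
      rw [this] at hn
      push_cast at hn
      linarith
    intro x hx
    have hb := hcb x hx
    have := Ef_pos hν0 hx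
    rw [hceq] at hb
    rw [abs_le]
    constructor <;> linarith [hb.1, hb.2]
  obtain ⟨hl, hd⟩ := h.left hν0 hM hne
  refine ⟨X, hX, hE, ?_⟩
  rcases lt_or_gt_of_ne (hl ν hν0 le_rfl) with hs | hs
  · have := key (fun x => -f x) (fun x => -f1 x) h.neg (fun x hx => by rw [abs_neg]; exact hM x hx)
      (by simpa using hne) (by simpa using hs) (by simpa using hasym)
    simpa using this
  · exact key f f1 h hM hne hs hasym


/-! ### Bessel equation from the integral representation -/

theorem bA_deriv (p q : ℝ → ℝ) (hp : Continuous p) (hq : Continuous q) (ν x a b : ℝ)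
    (hp1 : ∀ t, |p t| ≤ 1) (hq1 : ∀ t, |q t| ≤ 1) (φ φ' : ℝ → ℝ)
    (hφ : ∀ y, HasDerivAt φ (φ' y) y) (hφ' : Continuous φ') (hb : ∀ y, |φ' y| ≤ 1) :
    HasDerivAt (fun x => ∫ θ in a..b, q θ * φ (x * p θ - ν * θ))
      (∫ θ in a..b, q θ * p θ * φ' (x * p θ - ν * θ)) x := by
  have hφc : Continuous φ := continuous_iff_continuousAt.2 fun y => (hφ y).continuousAt
  refine (intervalIntegral.hasDerivAt_integral_of_dominated_loc_of_deriv_le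
    (s := univ) (bound := fun _ => 1) (F := fun x θ => q θ * φ (x * p θ - ν * θ))
    (F' := fun x θ => q θ * p θ * φ' (x * p θ - ν * θ)) Filter.univ_mem ?_ ?_ ?_ ?_ ?_ ?_).2
  · exact Filter.Eventually.of_forall fun x =>
      (by fun_prop : Continuous fun θ => q θ * φ (x * p θ - ν * θ)).aestronglyMeasurable
  · exact (by fun_prop : Continuous fun θ => q θ * φ (x * p θ - ν * θ)).intervalIntegrable _ _
  · exact (by fun_prop :
      Continuous fun θ => q θ * p θ * φ' (x * p θ - ν * θ)).aestronglyMeasurable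
  · refine Filter.Eventually.of_forall fun t _ y _ => ?_
    rw [norm_mul, norm_mul]
    simp only [Real.norm_eq_abs]
    have h1 := hp1 t
    have h2 := hq1 t
    have h3 := hb (y * p t - ν * t)
    calc |q t| * |p t| * |φ' (y * p t - ν * t)| ≤ 1 * 1 * 1 := by gcongr
      _ = 1 := by norm_num
  · exact intervalIntegrable_const
  · refine Filter.Eventually.of_forall fun t _ y _ => ?_
    have h1 : HasDerivAt (fun y => y * p t - ν * t) (p t) y := by
      simpa using ((hasDerivAt_id y).mul_const (p t)).sub_const (ν * t)
    refine (((hφ (y * p t - ν * t)).comp y h1).const_mul (q t)).congr_deriv ?_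
    ring

noncomputable def bA (ν x : ℝ) : ℝ := ∫ θ in (0:ℝ)..π, cos (x * sin θ - ν * θ)
noncomputable def bA1 (ν x : ℝ) : ℝ := ∫ θ in (0:ℝ)..π, sin θ * (-sin (x * sin θ - ν * θ))
noncomputable def bA2 (ν x : ℝ) : ℝ :=
  ∫ θ in (0:ℝ)..π, sin θ * sin θ * (-cos (x * sin θ - ν * θ))

theorem bA_hd (ν x : ℝ) : HasDerivAt (bA ν) (bA1 ν x) x := by
  have := bA_deriv sin (fun _ => 1) continuous_sin continuous_const ν x 0 π
    abs_sin_le_one (by simp) cos (fun y => -sin y) hasDerivAt_cos (by fun_prop)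
    (fun y => by simpa using abs_sin_le_one y)
  simp only [one_mul] at this
  exact this

theorem bA1_hd (ν x : ℝ) : HasDerivAt (bA1 ν) (bA2 ν x) x := by
  exact bA_deriv sin sin continuous_sin continuous_sin ν x 0 π
    abs_sin_le_one abs_sin_le_one (fun y => -sin y) (fun y => -cos y)
      (fun y => (hasDerivAt_sin y).neg) (by fun_prop)
    (fun y => by simpa using abs_cos_le_one y)

theorem bA_ode (ν x : ℝ) :
    x ^ 2 * bA2 ν x + x * bA1 ν x + (x ^ 2 - ν ^ 2) * bA ν x = (x - ν) * sin (ν * π) := by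
  have h : ∫ θ in (0:ℝ)..π, (x ^ 2 * (sin θ * sin θ * (-cos (x * sin θ - ν * θ)))
      + x * (sin θ * (-sin (x * sin θ - ν * θ))) + (x ^ 2 - ν ^ 2) * cos (x * sin θ - ν * θ))
      = (x * cos π + ν) * sin (x * sin π - ν * π) - (x * cos 0 + ν) * sin (x * sin 0 - ν * 0) := by
    refine intervalIntegral.integral_eq_sub_of_hasDerivAt
      (f := fun θ => (x * cos θ + ν) * sin (x * sin θ - ν * θ)) (fun θ _ => ?_)
      (Continuous.intervalIntegrable (by fun_prop) _ _)
    have h1 : HasDerivAt (fun θ => x * sin θ - ν * θ) (x * cos θ - ν * 1) θ :=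
      ((hasDerivAt_sin θ).const_mul x).sub ((hasDerivAt_id θ).const_mul ν)
    have h2 : HasDerivAt (fun θ => x * cos θ + ν) (x * (-sin θ)) θ :=
      ((hasDerivAt_cos θ).const_mul x).add_const ν
    refine (h2.mul h1.sin).congr_deriv ?_
    have := sin_sq_add_cos_sq θ
    have e : cos θ * cos θ = 1 - sin θ * sin θ := by nlinarith
    linear_combination (x ^ 2 * cos (x * sin θ - ν * θ)) * e
  rw [intervalIntegral.integral_add, intervalIntegral.integral_add,
    intervalIntegral.integral_const_mul, intervalIntegral.integral_const_mul,
    intervalIntegral.integral_const_mul] at h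
  · unfold bA bA1 bA2
    rw [h]; simp; ring
  all_goals exact Continuous.intervalIntegrable (by fun_prop) _ _

theorem exp_neg_int {ν : ℝ} (hν : 0 < ν) : IntegrableOn (fun t => exp (-ν * t)) (Ioi 0) :=
  exp_neg_integrableOn_Ioi 0 hν

theorem exp_neg_val {ν : ℝ} (hν : 0 < ν) : ∫ t in Ioi (0:ℝ), exp (-ν * t) = 1 / ν := by
  have := integral_exp_mul_Ioi (a := -ν) (by linarith) 0
  rw [this]; field_simp; simp

theorem pow_exp_bound {a s : ℝ} (ha : 0 < a) (hs : 0 ≤ s) (k : ℕ) :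
    s ^ k * exp (-a * s) ≤ k.factorial / a ^ k := by
  have h := pow_div_factorial_le_exp (a * s) (by positivity) k
  have e : exp (-a * s) = (exp (a * s))⁻¹ := by rw [← exp_neg]; ring_nf
  rw [e, ← div_eq_mul_inv, div_le_div_iff₀ (exp_pos _) (by positivity)]
  rw [div_le_iff₀ (by positivity), mul_pow] at h
  linarith

theorem bB_int {ν x : ℝ} (hν : 0 < ν) (hx : 0 < x) (k : ℕ) :
    IntegrableOn (fun t => sinh t ^ k * exp (-x * sinh t - ν * t)) (Ioi 0) := by
  refine Integrable.mono' ((exp_neg_int hν).const_mul (k.factorial / x ^ k)) 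
    (Continuous.aestronglyMeasurable (by fun_prop)) ?_
  refine (ae_restrict_mem measurableSet_Ioi).mono fun t ht => ?_
  have hs : 0 ≤ sinh t := sinh_nonneg_iff.2 (le_of_lt ht)
  rw [Real.norm_of_nonneg (by positivity), sub_eq_add_neg, exp_add, ← mul_assoc, ← neg_mul]
  exact mul_le_mul_of_nonneg_right (pow_exp_bound hx hs k) (exp_pos _).le

noncomputable def bB (ν : ℝ) (k : ℕ) (x : ℝ) : ℝ :=
  ∫ t in Ioi (0:ℝ), sinh t ^ k * exp (-x * sinh t - ν * t)

theorem bB_hd {ν x : ℝ} (hν : 0 < ν) (hx : 0 < x) (k : ℕ) :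
    HasDerivAt (bB ν k) (-bB ν (k+1) x) x := by
  have e : -bB ν (k+1) x = ∫ t in Ioi (0:ℝ), -(sinh t ^ (k+1) * exp (-x * sinh t - ν * t)) := by
    rw [integral_neg]; rfl
  rw [e]
  refine (hasDerivAt_integral_of_dominated_loc_of_deriv_le
    (s := Ioi (x/2)) (bound := fun t => sinh t ^ (k+1) * exp (-(x/2) * sinh t - ν * t))
    (F := fun x t => sinh t ^ k * exp (-x * sinh t - ν * t))
    (F' := fun x t => -(sinh t ^ (k+1) * exp (-x * sinh t - ν * t))) 
    (Ioi_mem_nhds (by linarith)) ?_ ?_ ?_ ?_ ?_ ?_).2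
  · exact Filter.Eventually.of_forall fun x => Continuous.aestronglyMeasurable (by fun_prop)
  · exact bB_int hν hx k
  · exact Continuous.aestronglyMeasurable (by fun_prop)
  · refine (ae_restrict_mem measurableSet_Ioi).mono fun t ht y hy => ?_
    have hs : 0 ≤ sinh t := sinh_nonneg_iff.2 (le_of_lt ht)
    rw [norm_neg, Real.norm_of_nonneg (by positivity)]
    have : x/2 < y := hy
    gcongr
  · exact bB_int hν (by linarith) (k+1)
  · refine Filter.Eventually.of_forall fun t y _ => ?_
    have h1 : HasDerivAt (fun y => -y * sinh t - ν * t) (-sinh t) y := by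
      simpa using ((hasDerivAt_id y).neg.mul_const (sinh t)).sub_const (ν * t)
    refine (h1.exp.const_mul (sinh t ^ k)).congr_deriv ?_
    ring

theorem bB_ode {ν x : ℝ} (hν : 0 < ν) (hx : 0 < x) :
    x ^ 2 * bB ν 2 x - x * bB ν 1 x + (x ^ 2 - ν ^ 2) * bB ν 0 x = x - ν := by
  have hsn : Filter.Tendsto sinh Filter.atTop Filter.atTop := by
    refine Filter.tendsto_atTop_mono' _ ?_ Filter.tendsto_id
    filter_upwards [Filter.eventually_ge_atTop 0] with t ht using self_le_sinh_iff.2 ht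
  have h : ∫ t in Ioi (0:ℝ), (x ^ 2 * (sinh t ^ 2 * exp (-x * sinh t - ν * t))
      - x * (sinh t ^ 1 * exp (-x * sinh t - ν * t))
      + (x ^ 2 - ν ^ 2) * (sinh t ^ 0 * exp (-x * sinh t - ν * t)))
      = 0 - (-((x * cosh 0 - ν) * exp (-x * sinh 0 - ν * 0))) := by
    refine integral_Ioi_of_hasDerivAt_of_tendsto
      (f := fun t => -((x * cosh t - ν) * exp (-x * sinh t - ν * t))) ?_ (fun t _ => ?_) ?_ ?_
    · exact Continuous.continuousWithinAt (by fun_prop)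
    · have h1 : HasDerivAt (fun t => -x * sinh t - ν * t) (-x * cosh t - ν * 1) t :=
        ((hasDerivAt_sinh t).const_mul (-x)).sub ((hasDerivAt_id t).const_mul ν)
      have h2 : HasDerivAt (fun t => x * cosh t - ν) (x * sinh t) t :=
        ((hasDerivAt_cosh t).const_mul x).sub_const ν
      refine ((h2.mul h1.exp).neg).congr_deriv ?_
      have e : cosh t ^ 2 = 1 + sinh t ^ 2 := by rw [cosh_sq]; ring
      linear_combination (x ^ 2 * exp (-x * sinh t - ν * t)) * e
    · exact (((bB_int hν hx 2).const_mul (x^2)).sub ((bB_int hν hx 1).const_mul x)).add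
        ((bB_int hν hx 0).const_mul (x^2 - ν^2))
    · -- limit zero
      have hz : Filter.Tendsto (fun t => (x * (2/x) + (x + ν)) * exp (-ν * t)) Filter.atTop
          (nhds 0) := by
        have : Filter.Tendsto (fun t => exp (-ν * t)) Filter.atTop (nhds 0) := by
          refine tendsto_exp_atBot.comp ?_
          exact Filter.tendsto_id.const_mul_atTop_of_neg (by linarith)
        simpa using this.const_mul (x * (2/x) + (x + ν))
      refine squeeze_zero_norm' ?_ hz
      filter_upwards [Filter.eventually_ge_atTop 0] with t ht
      have hs : 0 ≤ sinh t := sinh_nonneg_iff.2 ht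
      have hc : cosh t ≤ 1 + sinh t := by
        have := cosh_sq t
        nlinarith [cosh_pos t]
      have hc0 := cosh_pos t
      have hb := pow_exp_bound hx hs 1
      have hb0 : exp (-x * sinh t) ≤ 1 := by
        rw [exp_le_one_iff]; nlinarith [mul_nonneg hx.le hs]
      have hE := exp_pos (-x * sinh t)
      rw [norm_neg, norm_mul, Real.norm_of_nonneg (exp_pos _).le, Real.norm_eq_abs, sub_eq_add_neg (-x * sinh t),
        exp_add, ← mul_assoc, ← neg_mul]
      refine mul_le_mul_of_nonneg_right ?_ (exp_pos _).le
      have h3 : |x * cosh t - ν| ≤ x * sinh t + (x + ν) := by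
        rw [abs_le]; constructor <;> nlinarith
      simp at hb
      have e2 : 1 / x ≤ 2 / x := by gcongr; norm_num
      rw [← one_div] at hb
      calc |x * cosh t - ν| * exp (-x * sinh t) ≤ (x * sinh t + (x + ν)) * exp (-x * sinh t) := by
            gcongr
        _ = x * (sinh t * exp (-x * sinh t)) + (x + ν) * exp (-x * sinh t) := by ring
        _ ≤ x * (2 / x) + (x + ν) * 1 := by
            gcongr
            simpa using hb.trans e2
        _ = _ := by ring
  rw [integral_add, integral_sub, integral_const_mul, integral_const_mul, integral_const_mul] at h
  · unfold bB
    rw [h]; simp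
  · exact (bB_int hν hx 2).const_mul (x^2)
  · exact (bB_int hν hx 1).const_mul x
  · exact ((bB_int hν hx 2).const_mul (x^2)).sub ((bB_int hν hx 1).const_mul x)
  · exact (bB_int hν hx 0).const_mul (x^2 - ν^2)

theorem besselJ_eq (ν x : ℝ) :
    besselJ ν x = (1 / π) * bA ν x - (sin (ν * π) / π) * bB ν 0 x := by
  unfold besselJ bA bB
  simp only [pow_zero, one_mul]

theorem besselJ_BODE {ν : ℝ} (hν : 0 < ν) :
    BODE ν (besselJ ν) (fun x => (1 / π) * bA1 ν x - (sin (ν * π) / π) * (-bB ν 1 x)) := by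
  have he : besselJ ν = fun x => (1 / π) * bA ν x - (sin (ν * π) / π) * bB ν 0 x :=
    funext (besselJ_eq ν)
  constructor
  · intro x hx
    rw [he]
    exact ((bA_hd ν x).const_mul _).sub ((bB_hd hν hx 0).const_mul _)
  · intro x hx
    have h := ((bA1_hd ν x).const_mul (1/π)).sub
      ((bB_hd hν hx 1).neg.const_mul (sin (ν * π) / π))
    refine h.congr_deriv ?_
    have h1 := bA_ode ν x
    have h2 := bB_ode hν hx
    rw [he]
    have hp := pi_pos.ne'
    field_simp
    simp only [Nat.reduceAdd]
    try rw [mul_comm π ν]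
    linear_combination h1 - sin (ν * π) * h2

theorem bB_nonneg {ν x : ℝ} (k : ℕ) : 0 ≤ bB ν k x := by
  refine setIntegral_nonneg measurableSet_Ioi fun t ht => ?_
  have hs : 0 ≤ sinh t := sinh_nonneg_iff.2 (le_of_lt ht)
  positivity

theorem bB_le {ν x : ℝ} (hν : 0 < ν) (hx : 0 < x) : bB ν 0 x ≤ 1 / ν := by
  rw [← exp_neg_val hν]
  refine setIntegral_mono_on (bB_int hν hx 0) (exp_neg_int hν) measurableSet_Ioi fun t ht => ?_
  have hs : 0 ≤ sinh t := sinh_nonneg_iff.2 (le_of_lt ht)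
  simp only [pow_zero, one_mul]
  exact exp_le_exp.2 (by nlinarith [mul_nonneg hx.le hs])

theorem bB_le' {ν x : ℝ} (hν : 0 < ν) (hx : 0 < x) : bB ν 0 x ≤ 1 / x := by
  rw [← exp_neg_val hx]
  refine setIntegral_mono_on (bB_int hν hx 0) (exp_neg_int hx) measurableSet_Ioi fun t ht => ?_
  have hs : t ≤ sinh t := self_le_sinh_iff.2 (le_of_lt ht)
  have ht' : 0 < t := ht
  simp only [pow_zero, one_mul]
  exact exp_le_exp.2 (by nlinarith [mul_nonneg hx.le (sub_nonneg.2 hs), mul_pos hν ht'])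

theorem bA_le (ν x : ℝ) : |bA ν x| ≤ π := by
  have := intervalIntegral.norm_integral_le_of_norm_le_const (a := 0) (b := π) (C := 1)
    (f := fun θ => cos (x * sin θ - ν * θ)) (fun t _ => abs_cos_le_one _)
  unfold bA
  simpa [abs_of_pos pi_pos] using this

theorem besselJ_bdd {ν x : ℝ} (hν : 0 < ν) (hx : 0 < x) : |besselJ ν x| ≤ 1 + 1 / ν := by
  rw [besselJ_eq]
  have h1 := bA_le ν x
  have h2 := bB_le hν hx
  have h3 := bB_nonneg (ν := ν) (x := x) 0
  have h4 := abs_sin_le_one (ν * π)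
  have hp : 1 ≤ π := by linarith [pi_gt_three]
  calc _ ≤ |1 / π * bA ν x| + |sin (ν * π) / π * bB ν 0 x| := abs_sub _ _
    _ = |bA ν x| / π + |sin (ν*π)| / π * bB ν 0 x := by
      rw [abs_mul, abs_mul, abs_div, abs_div, abs_of_pos pi_pos, abs_of_nonneg h3, abs_one]; ring
    _ ≤ π / π + 1 / 1 * (1/ν) := by gcongr
    _ = _ := by rw [div_self pi_pos.ne']; ring


/-! ### Fresnel integral -/

/-- the unimodular exponential -/
noncomputable def ee (y : ℝ) : ℂ := Complex.exp (y * Complex.I)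

theorem ee_norm (y : ℝ) : ‖ee y‖ = 1 := Complex.norm_exp_ofReal_mul_I y

theorem ee_add (a b : ℝ) : ee (a + b) = ee a * ee b := by
  unfold ee; rw [← Complex.exp_add]; push_cast; ring_nf

theorem ee_re (y : ℝ) : (ee y).re = cos y := by unfold ee; exact Complex.exp_ofReal_mul_I_re y
theorem ee_im (y : ℝ) : (ee y).im = sin y := by unfold ee; exact Complex.exp_ofReal_mul_I_im y

@[fun_prop]
theorem ee_cont : Continuous ee := by unfold ee; fun_prop

theorem ee_hd {u : ℝ → ℝ} {u' x : ℝ} (h : HasDerivAt u u' x) :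
    HasDerivAt (fun y => ee (u y)) (ee (u x) * (u' * Complex.I)) x := by
  unfold ee
  exact (h.ofReal_comp.mul_const Complex.I).cexp

noncomputable def Fr (X : ℝ) : ℂ := ∫ u in (0:ℝ)..X, ee (-u ^ 2)

noncomputable def Qr (X : ℝ) : ℂ :=
  ∫ t in (0:ℝ)..1, ee (-X ^ 2 * (1 + t ^ 2)) * ((1 / (1 + t ^ 2) : ℝ) : ℂ)

theorem Fr_hd (X : ℝ) : HasDerivAt Fr (ee (-X ^ 2)) X := by
  have hc : Continuous fun u : ℝ => ee (-u ^ 2) := by fun_prop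
  exact intervalIntegral.integral_hasDerivAt_right (hc.intervalIntegrable _ _)
    hc.stronglyMeasurable.stronglyMeasurableAtFilter hc.continuousAt

theorem Fr_scale (X : ℝ) : X * ∫ t in (0:ℝ)..1, ee (-(X * t) ^ 2) = Fr X := by
  have := intervalIntegral.smul_integral_comp_mul_left (a := 0) (b := 1)
    (fun u : ℝ => ee (-u ^ 2)) X
  unfold Fr
  simpa using this

theorem g_cont : Continuous fun t : ℝ => ((1 / (1 + t ^ 2) : ℝ) : ℂ) := by
  refine Complex.continuous_ofReal.comp (Continuous.div continuous_const (by fun_prop) ?_)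
  intro t; positivity

theorem Qr_hd (X : ℝ) : HasDerivAt Qr (-2 * Complex.I * ee (-X ^ 2) * Fr X) X := by
  have e : (-2 * Complex.I * ee (-X ^ 2) * Fr X) = ∫ t in (0:ℝ)..1,
      (-2 * X * Complex.I) * ee (-X ^ 2 * (1 + t ^ 2)) := by
    rw [intervalIntegral.integral_const_mul, ← Fr_scale]
    have : ∀ t : ℝ, ee (-X ^ 2 * (1 + t ^ 2)) = ee (-X ^ 2) * ee (-(X * t) ^ 2) := by
      intro t; rw [← ee_add]; ring_nf
    simp_rw [this]
    rw [intervalIntegral.integral_const_mul]; ring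
  rw [e]
  refine (intervalIntegral.hasDerivAt_integral_of_dominated_loc_of_deriv_le
    (s := Metric.ball X 1) (bound := fun _ => 2 * (|X| + 1))
    (F := fun X t => ee (-X ^ 2 * (1 + t ^ 2)) * ((1 / (1 + t ^ 2) : ℝ) : ℂ))
    (F' := fun X t => (-2 * X * Complex.I) * ee (-X ^ 2 * (1 + t ^ 2)))
    (Metric.ball_mem_nhds _ one_pos) ?_ ?_ ?_ ?_ ?_ ?_).2
  · have := g_cont
    exact Filter.Eventually.of_forall fun x => Continuous.aestronglyMeasurable (by fun_prop)
  · have := g_cont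
    exact Continuous.intervalIntegrable (by fun_prop) _ _
  · exact Continuous.aestronglyMeasurable (by fun_prop)
  · refine Filter.Eventually.of_forall fun t _ y hy => ?_
    rw [norm_mul, ee_norm, norm_mul, norm_mul, Complex.norm_I, Complex.norm_real]
    rw [Metric.mem_ball, Real.dist_eq] at hy
    have h1 : |y| ≤ |X| + 1 := by
      have := abs_sub_abs_le_abs_sub y X
      linarith
    simp; exact h1
  · exact intervalIntegrable_const
  · refine Filter.Eventually.of_forall fun t _ y _ => ?_
    have h1 : HasDerivAt (fun y : ℝ => -y ^ 2 * (1 + t ^ 2)) (-(2 * y) * (1 + t ^ 2)) y := by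
      have := ((hasDerivAt_pow 2 y).neg).mul_const (1 + t ^ 2)
      simpa using this
    refine ((ee_hd h1).mul_const _).congr_deriv ?_
    have h0 : (1 + (t:ℂ) ^ 2) ≠ 0 := by
      have : (1 + t ^ 2 : ℝ) ≠ 0 := by positivity
      exact_mod_cast this
    push_cast
    field_simp

theorem Qr_zero : Qr 0 = (π / 4 : ℝ) := by
  unfold Qr
  simp only [ne_eq, OfNat.ofNat_ne_zero, not_false_eq_true, zero_pow, neg_zero, zero_mul]
  have : ee 0 = 1 := by simp [ee]
  simp only [this, one_mul]
  rw [intervalIntegral.integral_ofReal]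
  congr 1
  rw [integral_one_div_one_add_sq]
  simp

theorem Fr_Qr (X : ℝ) : Complex.I * Fr X ^ 2 = (π / 4 : ℝ) - Qr X := by
  have h : ∀ x, HasDerivAt (fun X => Complex.I * Fr X ^ 2 + Qr X) 0 x := by
    intro x
    refine ((((Fr_hd x).pow 2).const_mul Complex.I).add (Qr_hd x)).congr_deriv ?_
    push_cast; ring
  have h2 := is_const_of_deriv_eq_zero (fun x => (h x).differentiableAt)
    (fun x => (h x).deriv) X 0
  simp only [Qr_zero] at h2
  have h3 : Fr 0 = 0 := by simp [Fr]
  rw [h3] at h2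
  simp at h2
  push_cast
  rw [← h2]; ring

theorem Qr_le_one (X : ℝ) : ‖Qr X‖ ≤ 1 := by
  have := intervalIntegral.norm_integral_le_of_norm_le_const (a := 0) (b := 1) (C := 1)
    (f := fun t : ℝ => ee (-X ^ 2 * (1 + t ^ 2)) * ((1 / (1 + t ^ 2) : ℝ) : ℂ)) (fun t _ => by
      rw [norm_mul, ee_norm, Complex.norm_real, one_mul, Real.norm_of_nonneg (by positivity)]
      rw [div_le_one (by positivity)]; nlinarith [sq_nonneg t])
  unfold Qr
  simpa using this

theorem Fr_le (X : ℝ) : ‖Fr X‖ ≤ 2 := by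
  have h := Fr_Qr X
  have h2 : ‖Complex.I * Fr X ^ 2‖ ≤ 2 := by
    rw [h]
    refine (norm_sub_le _ _).trans ?_
    have := Qr_le_one X
    rw [Complex.norm_real, Real.norm_of_nonneg (by positivity)]
    linarith [pi_le_four]
  rw [norm_mul, Complex.norm_I, one_mul, norm_pow] at h2
  nlinarith [norm_nonneg (Fr X)]

theorem Qr_le {X : ℝ} (hX : 0 < X) : ‖Qr X‖ ≤ 5 / X := by
  have hg : ∀ t : ℝ, HasDerivAt (fun t : ℝ => ((1 / (1 + t ^ 2) : ℝ) : ℂ))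
      ((-(2 * t) / (1 + t ^ 2) ^ 2 : ℝ) : ℂ) t := by
    intro t
    refine HasDerivAt.ofReal_comp ?_
    have h1 : HasDerivAt (fun t : ℝ => 1 + t ^ 2) (2 * t) t := by
      simpa using (hasDerivAt_pow 2 t).const_add 1
    have h0 : (1 + t ^ 2 : ℝ) ≠ 0 := by positivity
    simp only [one_div]
    exact h1.inv h0
  have hF : ∀ t : ℝ, HasDerivAt (fun t => Fr (X * t)) (X * ee (-(X * t) ^ 2)) t := by
    intro t
    have h1 : HasDerivAt (fun t : ℝ => X * t) X t := by simpa using (hasDerivAt_id t).const_mul X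
    exact ((Fr_hd (X * t)).scomp t h1).congr_deriv (by simp)
  have hFc : Continuous fun t => Fr (X * t) :=
    continuous_iff_continuousAt.2 fun t => (hF t).continuousAt
  have hg'c : Continuous fun t : ℝ => ((-(2 * t) / (1 + t ^ 2) ^ 2 : ℝ) : ℂ) := by
    refine Complex.continuous_ofReal.comp (Continuous.div (by fun_prop) (by fun_prop) ?_)
    intro t; positivity
  have hp := intervalIntegral.integral_mul_deriv_eq_deriv_mul (a := 0) (b := 1)
    (fun t _ => hg t) (fun t _ => hF t) (hg'c.intervalIntegrable _ _)
    (Continuous.intervalIntegrable (by fun_prop) _ _)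
  have hQ : (X:ℂ) * Qr X = ee (-X ^ 2) * ∫ t in (0:ℝ)..1, ((1 / (1 + t ^ 2) : ℝ) : ℂ) *
      (X * ee (-(X * t) ^ 2)) := by
    unfold Qr
    rw [← intervalIntegral.integral_const_mul, ← intervalIntegral.integral_const_mul]
    congr 1; ext t
    rw [show -X ^ 2 * (1 + t ^ 2) = -X ^ 2 + -(X * t) ^ 2 by ring, ee_add]
    ring
  have hb := intervalIntegral.norm_integral_le_of_norm_le_const (a := 0) (b := 1) (C := 4)
    (f := fun t : ℝ => ((-(2 * t) / (1 + t ^ 2) ^ 2 : ℝ) : ℂ) * Fr (X * t)) (fun t ht => by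
      rw [uIoc_of_le zero_le_one] at ht
      rw [norm_mul, Complex.norm_real]
      have h1 := Fr_le (X * t)
      have h2 : ‖-(2 * t) / (1 + t ^ 2) ^ 2‖ ≤ 2 := by
        rw [norm_div, norm_neg, Real.norm_of_nonneg (by linarith [ht.1]),
          Real.norm_of_nonneg (by positivity), div_le_iff₀ (by positivity)]
        nlinarith [ht.1, ht.2, sq_nonneg t, sq_nonneg (t^2)]
      calc _ ≤ (2:ℝ) * 2 := by gcongr
        _ = 4 := by norm_num)
  have h1 : ‖(X:ℂ) * Qr X‖ ≤ 5 := by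
    rw [hQ, norm_mul, ee_norm, one_mul, hp]
    refine (norm_sub_le _ _).trans ?_
    have h3 := Fr_le X
    have h4 : Fr 0 = 0 := by simp [Fr]
    simp only [mul_zero, h4, sub_zero, mul_one]
    rw [norm_mul, Complex.norm_real]
    have h5 : ‖(1 / (1 + 1 ^ 2) : ℝ)‖ = 1/2 := by norm_num
    rw [h5]
    simp only [sub_zero, abs_one, mul_one] at hb
    linarith
  rw [norm_mul, Complex.norm_real, Real.norm_of_nonneg hX.le] at h1
  rw [le_div_iff₀ hX]; linarith

theorem Fr_phase {X : ℝ} (hX : 0 < X) (ξ : ℝ) :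
    |(ee ξ * Fr X).re ^ 2 - π / 8 * (1 + sin (2 * ξ))| ≤ 5 / X := by
  have hQ := Qr_le hX
  have h := Fr_Qr X
  have hF2 : Fr X ^ 2 = -Complex.I * (π / 4 : ℝ) + Complex.I * Qr X := by
    have : Fr X ^ 2 = -Complex.I * (Complex.I * Fr X ^ 2) := by
      rw [← mul_assoc, neg_mul, Complex.I_mul_I]; ring
    rw [this, h]; ring
  have hre : ∀ w : ℂ, w.re ^ 2 = (‖w ^ 2‖ + (w ^ 2).re) / 2 := by
    intro w
    rw [norm_pow, Complex.sq_norm, Complex.normSq_apply, pow_two w, Complex.mul_re]; ring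
  rw [hre, mul_pow, norm_mul, norm_pow, ee_norm, one_pow, one_mul]
  have he2 : ee ξ ^ 2 = ee (2 * ξ) := by rw [pow_two, ← ee_add]; ring_nf
  rw [he2]
  have h1 : |‖Fr X ^ 2‖ - π / 4| ≤ ‖Qr X‖ := by
    have h2 := abs_norm_sub_norm_le (Fr X ^ 2) (-Complex.I * (π / 4 : ℝ))
    rw [norm_mul, norm_neg, Complex.norm_I, one_mul, Complex.norm_real,
      Real.norm_of_nonneg (by positivity)] at h2
    refine h2.trans ?_
    rw [hF2, add_sub_cancel_left, norm_mul, Complex.norm_I, one_mul]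
  have h3 : (ee (2 * ξ) * Fr X ^ 2).re = π / 4 * sin (2 * ξ) +
      (ee (2 * ξ) * (Complex.I * Qr X)).re := by
    rw [hF2, mul_add, Complex.add_re]
    congr 1
    simp only [Complex.mul_re, Complex.neg_re, Complex.I_re, Complex.neg_im, Complex.I_im,
      Complex.ofReal_re, Complex.ofReal_im, ee_re, ee_im, Complex.mul_im]
    ring
  have h4 : |(ee (2 * ξ) * (Complex.I * Qr X)).re| ≤ ‖Qr X‖ := by
    refine (Complex.abs_re_le_norm _).trans ?_
    rw [norm_mul, norm_mul, ee_norm, Complex.norm_I, one_mul, one_mul]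
  rw [h3]
  rw [abs_le] at *
  constructor <;> linarith [h1.1, h1.2, h4.1, h4.2]


/-! ### Asymptotics of the Bessel function -/

noncomputable def Kr (ν x : ℝ) : ℂ :=
  ∫ φ in (0:ℝ)..(π/2), ee (-x * (1 - cos φ)) * ((cos (ν * φ) : ℝ) : ℂ)

theorem bA_Kr (ν x : ℝ) : bA ν x = 2 * (ee (x - ν * π / 2) * Kr ν x).re := by
  have e1 : bA ν x = ∫ φ in (-(π/2))..(π/2), cos (x * cos φ - ν * φ - ν * π / 2) := by
    unfold bA
    have := intervalIntegral.integral_comp_add_right (a := -(π/2)) (b := π/2)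
      (fun θ => cos (x * sin θ - ν * θ)) (π/2)
    rw [show -(π/2) + π/2 = 0 by ring, show π/2 + π/2 = π by ring] at this
    rw [← this]
    congr 1; ext φ
    rw [sin_add_pi_div_two]; congr 1; ring
  have hc : ∀ s : ℝ, Continuous fun φ => cos (x * cos φ - s * ν * φ - ν * π / 2) :=
    fun s => by fun_prop
  have e2 : ∫ φ in (-(π/2))..0, cos (x * cos φ - ν * φ - ν * π / 2) =
      ∫ φ in (0:ℝ)..(π/2), cos (x * cos φ + ν * φ - ν * π / 2) := by
    have := intervalIntegral.integral_comp_neg (a := 0) (b := π/2)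
      (fun φ => cos (x * cos φ - ν * φ - ν * π / 2))
    rw [neg_zero] at this
    rw [← this]
    congr 1; ext φ
    rw [cos_neg]; congr 1; ring
  rw [e1, ← intervalIntegral.integral_add_adjacent_intervals (b := 0), e2,
    ← intervalIntegral.integral_add]
  · have e3 : ee (x - ν * π / 2) * Kr ν x = ∫ φ in (0:ℝ)..(π/2),
        ee (x * cos φ - ν * π / 2) * ((cos (ν * φ) : ℝ) : ℂ) := by
      unfold Kr
      rw [← intervalIntegral.integral_const_mul]
      congr 1; ext φ
      rw [← mul_assoc, ← ee_add]; congr 2; ring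
    have hIntg : IntervalIntegrable (fun φ => ee (x * cos φ - ν * π / 2) * ((cos (ν * φ) : ℝ) : ℂ))
        volume 0 (π/2) := Continuous.intervalIntegrable (by fun_prop) _ _
    have e4 := (Complex.reCLM.intervalIntegral_comp_comm hIntg).symm
    simp only [Complex.reCLM_apply] at e4
    rw [e3, e4, ← intervalIntegral.integral_const_mul]
    congr 1; ext φ
    rw [Complex.mul_re, Complex.ofReal_re, Complex.ofReal_im, ee_re, mul_zero, sub_zero]
    rw [show x * cos φ + ν * φ - ν * π / 2 = (x * cos φ - ν * π / 2) + ν * φ by ring,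
      show x * cos φ - ν * φ - ν * π / 2 = (x * cos φ - ν * π / 2) - ν * φ by ring]
    generalize x * cos φ - ν * π / 2 = y
    rw [cos_add, cos_sub]
    ring
  all_goals exact Continuous.intervalIntegrable (by fun_prop) _ _

noncomputable def K1 (x : ℝ) : ℂ :=
  ∫ φ in (0:ℝ)..(π/2), ee (-x * (1 - cos φ)) * ((cos (φ / 2) : ℝ) : ℂ)

theorem K1_eq {x : ℝ} (hx : 0 < x) : (√x : ℂ) * K1 x = (√2 : ℂ) * Fr (√x) := by
  have hd : ∀ φ : ℝ, HasDerivAt (fun φ => √x * √2 * sin (φ / 2)) (√x * √2 * (cos (φ/2) * (1/2))) φ :=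
    fun φ => (((hasDerivAt_id φ).div_const 2).sin).const_mul _
  have hF : ∀ φ : ℝ, HasDerivAt (fun φ => Fr (√x * √2 * sin (φ / 2)))
      ((√x * (√2 / 2) : ℝ) * (ee (-x * (1 - cos φ)) * ((cos (φ / 2) : ℝ) : ℂ))) φ := by
    intro φ
    refine ((Fr_hd _).scomp φ (hd φ)).congr_deriv ?_
    have h1 : -(√x * √2 * sin (φ / 2)) ^ 2 = -x * (1 - cos φ) := by
      have h2 : cos φ = 1 - 2 * sin (φ/2) ^ 2 := by
        have := cos_two_mul (φ/2)
        rw [show 2 * (φ/2) = φ by ring] at this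
        have := sin_sq_add_cos_sq (φ/2)
        linarith
      rw [h2, mul_pow, mul_pow, sq_sqrt hx.le, sq_sqrt (by norm_num : (0:ℝ) ≤ 2)]; ring
    rw [h1, Complex.real_smul]; push_cast; ring
  have h := intervalIntegral.integral_eq_sub_of_hasDerivAt (a := 0) (b := π/2)
    (fun φ _ => hF φ) (Continuous.intervalIntegrable (by fun_prop) _ _)
  rw [intervalIntegral.integral_const_mul] at h
  have h0 : Fr 0 = 0 := by simp [Fr]
  rw [zero_div, sin_zero, mul_zero, h0, sub_zero, show π/2/2 = π/4 by ring, sin_pi_div_four] at h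
  have hs : √2 * √2 = 2 := mul_self_sqrt (by norm_num)
  have hsC : (√2 : ℂ) * (√2 : ℂ) = 2 := by exact_mod_cast hs
  have e : √x * √2 * (√2 / 2) = √x := by linear_combination √x / 2 * hs
  rw [e] at h
  rw [← h]
  unfold K1
  push_cast
  linear_combination (-(√x : ℂ) / 2 * ∫ φ in (0:ℝ)..(π/2), ee (-x * (1 - cos φ)) * (Complex.cos (φ / 2))) * hsC

theorem half_pi_bound {φ : ℝ} (h0 : 0 ≤ φ) (h1 : φ ≤ π/2) : φ ≤ 2 * sin φ := by
  have := mul_le_sin h0 h1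
  have hp := pi_pos
  have hp4 := pi_le_four
  have h3 : 1/2 * φ ≤ 2/π * φ := by
    gcongr ?_ * _
    rw [div_le_div_iff₀ (by norm_num) hp]; linarith
  linarith

theorem Kr_rem {ν x : ℝ} (hν : 0 ≤ ν) (hx : 0 < x) :
    ‖Kr ν x - K1 x‖ ≤ (30 * (ν ^ 2 + 1)) / x := by
  set c := ν ^ 2 + 1 with hc
  have hc0 : 0 < c := by positivity
  set r : ℝ → ℝ := fun φ => cos (ν * φ) - cos (φ / 2) with hr
  set r' : ℝ → ℝ := fun φ => -ν * sin (ν * φ) + sin (φ / 2) / 2 with hr'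
  have hrd : ∀ φ, HasDerivAt r (r' φ) φ := by
    intro φ
    have h1 : HasDerivAt (fun φ => ν * φ) ν φ := by simpa using (hasDerivAt_id φ).const_mul ν
    refine (h1.cos.sub (((hasDerivAt_id φ).div_const 2).cos)).congr_deriv ?_
    simp only [hr', id]; ring
  have hrb : ∀ φ, |r φ| ≤ c * φ ^ 2 := by
    intro φ
    have h1 := one_sub_sq_div_two_le_cos (x := ν * φ)
    have h2 := one_sub_sq_div_two_le_cos (x := φ / 2)
    have h3 := cos_le_one (ν * φ)
    have h4 := cos_le_one (φ / 2)
    simp only [hr, abs_le]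
    have := mul_nonneg (sq_nonneg ν) (sq_nonneg φ)
    constructor <;> nlinarith [sq_nonneg φ]
  have hrb' : ∀ φ, 0 ≤ φ → |r' φ| ≤ c * φ := by
    intro φ h0
    have h1 : |sin (ν * φ)| ≤ ν * φ := by
      have := abs_sin_le_abs (x := ν * φ)
      rwa [abs_of_nonneg (mul_nonneg hν h0)] at this
    have h2 : |sin (φ / 2)| ≤ φ / 2 := by
      have := abs_sin_le_abs (x := φ / 2)
      rwa [abs_of_nonneg (by linarith : 0 ≤ φ/2)] at this
    calc |r' φ| ≤ |-ν * sin (ν * φ)| + |sin (φ / 2) / 2| := abs_add_le _ _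
      _ = ν * |sin (ν * φ)| + |sin (φ/2)| / 2 := by
        rw [abs_mul, abs_neg, abs_of_nonneg hν, abs_div, abs_two]
      _ ≤ ν * (ν * φ) + φ / 2 / 2 := by gcongr
      _ ≤ c * φ := by rw [hc]; nlinarith
  have hrc : Continuous r := by simp only [hr]; fun_prop
  have hrc' : Continuous r' := by simp only [hr']; fun_prop
  set h' : ℝ → ℝ := fun φ => r' φ / sin φ - r φ * cos φ / sin φ ^ 2 with hh'
  have hhd : ∀ φ ∈ Ioo 0 (π/2), HasDerivAt (fun φ => r φ / sin φ) (h' φ) φ := by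
    intro φ hφ
    have hs : 0 < sin φ := sin_pos_of_pos_of_lt_pi hφ.1 (by linarith [hφ.2, pi_pos])
    refine ((hrd φ).div (hasDerivAt_sin φ) hs.ne').congr_deriv ?_
    simp only [hh']; field_simp
  have hhb : ∀ φ ∈ Ioo 0 (π/2), |h' φ| ≤ 6 * c := by
    intro φ hφ
    have hs : 0 < sin φ := sin_pos_of_pos_of_lt_pi hφ.1 (by linarith [hφ.2, pi_pos])
    have hb := half_pi_bound hφ.1.le hφ.2.le
    have h1 : |r' φ / sin φ| ≤ 2 * c := by
      rw [abs_div, abs_of_pos hs, div_le_iff₀ hs]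
      have := hrb' φ hφ.1.le
      nlinarith
    have h2 : |r φ * cos φ / sin φ ^ 2| ≤ 4 * c := by
      rw [abs_div, abs_of_pos (pow_pos hs 2), div_le_iff₀ (pow_pos hs 2), abs_mul]
      have h3 := hrb φ
      have h4 := abs_cos_le_one φ
      have h5 : φ ^ 2 ≤ 4 * sin φ ^ 2 := by nlinarith [hφ.1]
      calc |r φ| * |cos φ| ≤ (c * φ ^ 2) * 1 := by gcongr
        _ ≤ _ := by nlinarith
    calc |h' φ| ≤ _ := abs_sub _ _
      _ ≤ 6 * c := by linarith
  have hhbs : ∀ φ ∈ Icc 0 (π/2), |r φ / sin φ| ≤ 2 * c * φ := by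
    intro φ hφ
    rcases eq_or_lt_of_le hφ.1 with h0 | h0
    · rw [← h0]; simp
    · have hs : 0 < sin φ := sin_pos_of_pos_of_lt_pi h0 (by linarith [hφ.2, pi_pos])
      have hb := half_pi_bound hφ.1 hφ.2
      rw [abs_div, abs_of_pos hs, div_le_iff₀ hs]
      have h3 := hrb φ
      have := mul_le_mul_of_nonneg_left hb (mul_nonneg hc0.le h0.le)
      nlinarith
  set G : ℝ → ℂ := fun φ => ee (-x * (1 - cos φ)) * ((r φ / sin φ : ℝ) : ℂ) with hG
  set D : ℝ → ℂ := fun φ => (-(x:ℂ) * Complex.I) * (ee (-x * (1 - cos φ)) * (r φ : ℂ)) with hD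
  set E : ℝ → ℂ := fun φ => ee (-x * (1 - cos φ)) * ((h' φ : ℝ) : ℂ) with hE
  have hGc : ContinuousOn G (Icc 0 (π/2)) := by
    refine ContinuousOn.mul (Continuous.continuousOn (by fun_prop)) ?_
    refine Complex.continuous_ofReal.comp_continuousOn ?_
    intro φ hφ
    rcases eq_or_lt_of_le hφ.1 with h0 | h0
    · rw [← h0]
      have : Filter.Tendsto (fun φ => r φ / sin φ) (nhdsWithin 0 (Icc 0 (π/2))) (nhds 0) := by
        have hz : Filter.Tendsto (fun φ => 2 * c * φ) (nhdsWithin 0 (Icc 0 (π/2))) (nhds 0) := by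
          have : Continuous fun φ : ℝ => 2 * c * φ := by fun_prop
          have h7 : ContinuousWithinAt (fun φ : ℝ => 2 * c * φ) (Icc 0 (π/2)) 0 :=
            this.continuousAt.continuousWithinAt
          unfold ContinuousWithinAt at h7
          simpa using h7
        refine squeeze_zero_norm' ?_ hz
        filter_upwards [self_mem_nhdsWithin] with y hy using hhbs y hy
      unfold ContinuousWithinAt
      simpa using this
    · have hs : 0 < sin φ := sin_pos_of_pos_of_lt_pi h0 (by linarith [hφ.2, pi_pos])
      exact (hrc.continuousAt.div continuous_sin.continuousAt hs.ne').continuousWithinAt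
  have hGd : ∀ φ ∈ Ioo 0 (π/2), HasDerivAt G (D φ + E φ) φ := by
    intro φ hφ
    have hs : 0 < sin φ := sin_pos_of_pos_of_lt_pi hφ.1 (by linarith [hφ.2, pi_pos])
    have h1 : HasDerivAt (fun φ => -x * (1 - cos φ)) (-x * sin φ) φ := by
      simpa using ((hasDerivAt_cos φ).const_sub 1).const_mul (-x)
    refine ((ee_hd h1).mul (hhd φ hφ).ofReal_comp).congr_deriv ?_
    simp only [hD, hE]
    have hsC : (sin φ : ℂ) ≠ 0 := by exact_mod_cast hs.ne'
    push_cast at hsC ⊢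
    field_simp
  have hEb : ∀ φ ∈ Ioo 0 (π/2), ‖E φ‖ ≤ 6 * c := by
    intro φ hφ
    simp only [hE]
    rw [norm_mul, ee_norm, one_mul, Complex.norm_real]
    exact hhb φ hφ
  have hDi : IntervalIntegrable D volume 0 (π/2) := 
    Continuous.intervalIntegrable (by simp only [hD]; fun_prop) _ _
  have hp2 : (0:ℝ) ≤ π/2 := by positivity
  have hae : ∀ᵐ φ ∂(volume.restrict (Ioc 0 (π/2))), φ ∈ Ioo 0 (π/2) := by
    rw [← Measure.restrict_congr_set (Ioo_ae_eq_Ioc (μ := (volume : Measure ℝ)))]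
    exact ae_restrict_mem measurableSet_Ioo
  have hEi : IntervalIntegrable E volume 0 (π/2) := by
    rw [intervalIntegrable_iff, uIoc_of_le hp2]
    refine Integrable.mono' (g := fun _ => 6 * c) (integrable_const _) ?_ ?_
    · refine AEStronglyMeasurable.mul (Continuous.aestronglyMeasurable (by fun_prop)) ?_
      refine (Measurable.aestronglyMeasurable ?_)
      refine Complex.measurable_ofReal.comp ?_
      simp only [hh']
      have m1 := hrc.measurable
      have m2 := hrc'.measurable
      have m3 := measurable_sin
      have m4 := measurable_cos
      exact (m2.div m3).sub ((m1.mul m4).div (m3.pow_const 2))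
    · exact hae.mono hEb
  have hFTC := intervalIntegral.integral_eq_sub_of_hasDerivAt_of_le hp2 hGc hGd (hDi.add hEi)
  rw [intervalIntegral.integral_add hDi hEi] at hFTC
  have hDv : ∫ φ in (0:ℝ)..(π/2), D φ = (-(x:ℂ) * Complex.I) * (Kr ν x - K1 x) := by
    simp only [hD]
    rw [intervalIntegral.integral_const_mul]
    congr 1
    unfold Kr K1
    rw [← intervalIntegral.integral_sub]
    · congr 1; ext φ; simp only [hr]; push_cast; ring
    all_goals exact Continuous.intervalIntegrable (by fun_prop) _ _
  have hEv : ‖∫ φ in (0:ℝ)..(π/2), E φ‖ ≤ 6 * c * (π/2) := by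
    have := intervalIntegral.norm_integral_le_of_norm_le_const_ae (a := 0) (b := π/2) (C := 6 * c)
      (f := E) (by
        rw [uIoc_of_le hp2, ← ae_restrict_iff' measurableSet_Ioc]
        exact hae.mono hEb)
    rwa [sub_zero, abs_of_nonneg hp2] at this
  have hG0 : G 0 = 0 := by simp [hG]
  have hG1 : ‖G (π/2)‖ ≤ 2 * c * (π/2) := by
    simp only [hG]
    rw [norm_mul, ee_norm, one_mul, Complex.norm_real]
    exact hhbs _ ⟨hp2, le_rfl⟩
  have hfin : ‖(-(x:ℂ) * Complex.I) * (Kr ν x - K1 x)‖ ≤ 30 * c := by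
    rw [← hDv, show (∫ φ in (0:ℝ)..(π/2), D φ) = G (π/2) - (∫ φ in (0:ℝ)..(π/2), E φ) by
      rw [hG0, sub_zero] at hFTC; rw [← hFTC]; ring]
    refine (norm_sub_le _ _).trans ?_
    have := pi_le_four
    have h5 : 8 * c * (π/2) ≤ 8 * c * (4/2) := by gcongr
    linarith
  rw [norm_mul, norm_mul, norm_neg, Complex.norm_I, Complex.norm_real, mul_one,
    Real.norm_of_nonneg hx.le] at hfin
  rw [le_div_iff₀ hx]; linarith

set_option maxHeartbeats 1000000 in
theorem besselJ_asym {ν : ℝ} (hν : 0 < ν) :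
    Filter.Tendsto (fun x => x * besselJ ν x ^ 2 - (1 / π) * (1 + sin (2 * x - ν * π)))
      Filter.atTop (nhds 0) := by
  set c := 30 * (ν ^ 2 + 1) + 1 with hc
  have hc0 : 0 < c := by positivity
  have hz : Filter.Tendsto (fun x : ℝ => (100 + 20 * c + c ^ 2) * (√x)⁻¹) Filter.atTop (nhds 0) := by
    have := (tendsto_inv_atTop_zero.comp tendsto_sqrt_atTop).const_mul (100 + 20 * c + c ^ 2)
    simpa using this
  refine squeeze_zero_norm' ?_ hz
  filter_upwards [Filter.eventually_ge_atTop 1] with x hx1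
  have hx : 0 < x := by linarith
  set y := √x with hy
  have hy1 : 1 ≤ y := by rw [hy]; exact one_le_sqrt.2 hx1
  have hy0 : 0 < y := by linarith
  have hyx : y ^ 2 = x := sq_sqrt hx.le
  have hyC : (y:ℂ) ^ 2 = x := by exact_mod_cast hyx
  set ξ := x - ν * π / 2 with hξ
  set p := (ee ξ * Fr y).re with hp
  set R := (ee ξ * (Kr ν x - K1 x)).re with hR
  have hRb : |R| ≤ 30 * (ν ^ 2 + 1) / x := by
    refine (Complex.abs_re_le_norm _).trans ?_
    rw [norm_mul, ee_norm, one_mul]; exact Kr_rem hν.le hx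
  have hpb : |p| ≤ 2 := by
    refine (Complex.abs_re_le_norm _).trans ?_
    rw [norm_mul, ee_norm, one_mul]; exact Fr_le y
  have hA : y * bA ν x = 2 * √2 * p + 2 * y * R := by
    rw [bA_Kr]
    have h1 : (y:ℂ) * (ee ξ * Kr ν x) = (√2 : ℝ) * (ee ξ * Fr y) + (y:ℝ) * (ee ξ * (Kr ν x - K1 x)) := by
      have := K1_eq hx
      linear_combination (ee ξ) * this
    have h2 := congrArg Complex.re h1
    rw [Complex.add_re, Complex.re_ofReal_mul, Complex.re_ofReal_mul, Complex.re_ofReal_mul] at h2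
    linear_combination 2 * h2
  set B := bB ν 0 x with hB
  have hBb : |B| ≤ 1 / x := by
    rw [abs_of_nonneg (bB_nonneg 0)]; exact bB_le' hν hx
  set ε := y * (2 * R - sin (ν * π) * B) / π with hε
  have hJ : y * besselJ ν x = 2 * √2 / π * p + ε := by
    rw [besselJ_eq, hε]
    have hp := pi_pos.ne'
    field_simp
    linear_combination hA
  have hεb : |ε| ≤ c / y := by
    rw [hε, abs_div, abs_of_pos pi_pos, abs_mul, abs_of_pos hy0, div_le_iff₀ pi_pos]
    have h1 : |2 * R - sin (ν * π) * B| ≤ 2 * (30 * (ν ^ 2 + 1) / x) + 1 * (1/x) := by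
      refine (abs_sub _ _).trans ?_
      rw [abs_mul, abs_mul, abs_two]
      have := abs_sin_le_one (ν * π)
      gcongr
    have h2 : 2 * (30 * (ν ^ 2 + 1) / x) + 1 * (1/x) ≤ 2 * c / x := by
      rw [hc, mul_div, one_mul, ← add_div]
      gcongr; linarith
    calc y * |2 * R - sin (ν * π) * B| ≤ y * (2 * c / x) := by gcongr; exact h1.trans h2
      _ = c / y * 2 := by rw [← hyx]; field_simp
      _ ≤ c / y * π := by gcongr; exact two_le_pi
  have hph := Fr_phase hy0 ξ
  have hsq : (√2) ^ 2 = 2 := sq_sqrt (by norm_num)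
  have h2ξ : 2 * ξ = 2 * x - ν * π := by rw [hξ]; ring
  rw [h2ξ, ← hp] at hph
  have key : x * besselJ ν x ^ 2 - (1 / π) * (1 + sin (2 * x - ν * π)) =
      8 / π ^ 2 * (p ^ 2 - π / 8 * (1 + sin (2 * x - ν * π))) + 2 * (2 * √2 / π * p) * ε + ε ^ 2 := by
    have : x * besselJ ν x ^ 2 = (y * besselJ ν x) ^ 2 := by rw [mul_pow, hyx]
    rw [this, hJ]
    have hp := pi_pos.ne'
    field_simp
    linear_combination (4 * p ^ 2) * hsq
  rw [key, Real.norm_eq_abs]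
  have hpi : 8 / π ^ 2 ≤ 1 := by
    rw [div_le_one (by positivity)]; nlinarith [pi_gt_three]
  have h22 : 2 * √2 / π ≤ 1 := by
    rw [div_le_one pi_pos]
    nlinarith [pi_gt_three, sqrt_nonneg 2]
  have hcy : c / y ≤ c := div_le_self hc0.le hy1
  have t1 : |8 / π ^ 2 * (p ^ 2 - π / 8 * (1 + sin (2 * x - ν * π)))| ≤ 1 * (5 / y) := by
    rw [abs_mul, abs_of_nonneg (by positivity)]
    gcongr
  have t2 : |2 * (2 * √2 / π * p) * ε| ≤ 2 * (1 * 2) * (c / y) := by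
    rw [abs_mul, abs_mul, abs_mul, abs_two, abs_of_nonneg (by positivity : 0 ≤ 2 * √2 / π)]
    gcongr
  have t3 : |ε ^ 2| ≤ c * (c / y) := by
    rw [abs_pow, pow_two]
    gcongr
    exact hεb.trans hcy
  refine (abs_add_three _ _ _).trans ?_
  have e5 : 5 / y = 5 * y⁻¹ := div_eq_mul_inv _ _
  have ec : c / y = c * y⁻¹ := div_eq_mul_inv _ _
  rw [e5] at t1
  rw [ec] at t2 t3
  have hyi : 0 < y⁻¹ := by positivity
  nlinarith [mul_pos hc0 hyi]

theorem besselJ_main {ν : ℝ} (hν : 1/2 ≤ ν) :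
    ∃ X, ν < X ∧ Ef ν X = 3/2 ∧ (∀ x, 0 < x → x ≤ X → besselJ ν x ≠ 0) ∧ ∃ θ : ℝ → ℝ,
      (0 < θ X ∧ θ X < π) ∧
      (∀ x, ν < x → HasDerivAt θ (om ν x / x + x / om ν x ^ 2 * (sin (θ x) * cos (θ x))) x) ∧
      (∀ x, ν < x → (besselJ ν x = 0 ↔ sin (θ x) = 0)) ∧
      (∀ x, ν < x → |θ x - Sf ν x - π/4| ≤ 3/4 * Ef ν x) :=
  BODE.main hν (besselJ_BODE (by linarith)) (fun x hx => besselJ_bdd (by linarith) hx)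
    (besselJ_asym (by linarith))


/-! ### Counting zeros for a single order -/

theorem cross {ν c : ℝ} {θ : ℝ → ℝ} (hν : 0 < ν) (hc : sin c = 0)
    (hθ : ∀ x, ν < x → HasDerivAt θ (om ν x / x + x / om ν x ^ 2 * (sin (θ x) * cos (θ x))) x)
    {x₀ x : ℝ} (h0 : ν < x₀) (hx : x₀ < x) (h : c ≤ θ x₀) : c < θ x := by
  have hpos : ∀ y, ν < y → θ y = c →
      0 < om ν y / y + y / om ν y ^ 2 * (sin (θ y) * cos (θ y)) := by
    intro y hy h1
    rw [h1, hc, zero_mul, mul_zero, add_zero]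
    exact div_pos (om_pos hν.le hy) (hν.trans hy)
  have hge : ∀ y ∈ Icc x₀ x, c ≤ θ y := by
    intro y hy
    exact image_le_of_deriv_right_lt_deriv_boundary' (f := fun _ => c) (f' := fun _ => 0)
      (B := θ) (a := x₀) (b := x)
      (B' := fun z => om ν z / z + z / om ν z ^ 2 * (sin (θ z) * cos (θ z))) continuousOn_const
      (fun z _ => hasDerivWithinAt_const z _ c) h
      (fun z hz => (hθ z (h0.trans_le hz.1)).continuousAt.continuousWithinAt)
      (fun z hz => (hθ z (h0.trans_le hz.1)).hasDerivWithinAt)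
      (fun z hz h1 => hpos z (h0.trans_le hz.1) h1.symm) hy
  rcases lt_or_eq_of_le (hge x ⟨hx.le, le_rfl⟩) with h1 | h1
  · exact h1
  exfalso
  have hd := hθ x (h0.trans hx)
  have hp := hpos x (h0.trans hx) h1.symm
  rw [hasDerivAt_iff_tendsto_slope] at hd
  have h2 := hd.eventually (lt_mem_nhds hp)
  have h3 : ∀ᶠ y in nhdsWithin x (Iio x), 0 < slope θ x y :=
    h2.filter_mono (nhdsWithin_mono x (fun y hy => ne_of_lt hy))
  have h4 : ∀ᶠ y in nhdsWithin x (Iio x), y ∈ Ioo x₀ x := Ioo_mem_nhdsLT hx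
  obtain ⟨y, hy1, hy2⟩ := (h3.and h4).exists
  have h5 := hge y ⟨hy2.1.le, hy2.2.le⟩
  rw [slope_def_field, ← h1] at hy1
  have : (θ y - c) / (y - x) ≤ 0 := div_nonpos_of_nonneg_of_nonpos (by linarith) (by linarith [hy2.2])
  linarith

theorem sin_nat_pi (k : ℕ) : sin (k * π) = 0 := sin_nat_mul_pi k

theorem Ef_mono_le {ν x y : ℝ} (hν : 0 < ν) (hx : ν < x) (hxy : x ≤ y) : Ef ν y ≤ Ef ν x := by
  have hx0 : 0 < x := hν.trans hx
  have hy0 : 0 < y := hx0.trans_le hxy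
  have hωx := om_pos hν.le hx
  have hωy := om_pos hν.le (hx.trans_le hxy)
  have e1 := om_sq hν.le hx.le
  have e2 := om_sq hν.le (hx.trans_le hxy).le
  have h1 : om ν x ≤ om ν y := by
    refine le_of_sq_le_sq ?_ hωy.le
    rw [e1, e2]; nlinarith
  unfold Ef
  rw [div_le_div_iff₀ (by positivity) (by positivity)]
  have h2 : y ^ 2 * om ν x ^ 2 ≤ x ^ 2 * om ν y ^ 2 := by
    rw [e1, e2]
    have : x ^ 2 ≤ y ^ 2 := by gcongr
    nlinarith [mul_le_mul_of_nonneg_left this (sq_nonneg ν)]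
  calc y ^ 2 * om ν x ^ 3 = (y ^ 2 * om ν x ^ 2) * om ν x := by ring
    _ ≤ (x ^ 2 * om ν y ^ 2) * om ν y := by gcongr
    _ = _ := by ring

theorem zcount_zero {ν μ : ℝ} (hν : 1/2 ≤ ν) (hμ : μ ≤ ν) : zcount ν μ = 0 := by
  obtain ⟨X, hX, _, hnz, _⟩ := besselJ_main hν
  unfold zcount
  have : {x : ℝ | 0 < x ∧ x ≤ μ ∧ besselJ ν x = 0} = ∅ := by
    ext x
    simp only [mem_ofPred_eq, mem_empty_iff_false, iff_false]
    rintro ⟨h1, h2, h3⟩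
    exact hnz x h1 (by linarith) h3
  rw [this, ncard_empty]

theorem zcount_floor {ν μ : ℝ} (hν : 1/2 ≤ ν) (hμ : ν < μ) :
    ∃ τ, zcount ν μ = ⌊τ / π⌋₊ ∧ |τ - Sf ν μ - π/4| ≤ 3/4 * Ef ν μ ∧
      |τ - Sf ν μ - π/4| ≤ 9/8 := by
  have hν0 : 0 < ν := by linarith
  obtain ⟨X, hX, hEX, hnz, θ, hθX, hθ, hzero, hphase⟩ := besselJ_main hν
  rcases le_or_gt μ X with hμX | hμX
  · refine ⟨Sf ν μ + π / 4, ?_, ?_, ?_⟩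
    · have h0 : zcount ν μ = 0 := by
        unfold zcount
        have : {x : ℝ | 0 < x ∧ x ≤ μ ∧ besselJ ν x = 0} = ∅ := by
          ext x
          simp only [mem_ofPred_eq, mem_empty_iff_false, iff_false]
          rintro ⟨h1, h2, h3⟩
          exact hnz x h1 (by linarith) h3
        rw [this, ncard_empty]
      rw [h0]; symm
      rw [Nat.floor_eq_zero, div_lt_one pi_pos]
      have h1 : Sf ν μ ≤ Sf ν X := Sf_mono hν0 hμ.le hX.le hμX
      have h2 := Sf_le_inv hν0 hX
      rw [hEX] at h2
      linarith [pi_gt_three]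
    · have := Ef_pos hν0 hμ
      rw [show Sf ν μ + π / 4 - Sf ν μ - π/4 = 0 by ring, abs_zero]; positivity
    · rw [show Sf ν μ + π / 4 - Sf ν μ - π/4 = 0 by ring, abs_zero]; norm_num
  · have hEμ := Ef_mono_le hν0 hX hμX.le
    refine ⟨θ μ, ?_, hphase μ hμ, (hphase μ hμ).trans (by linarith)⟩
    have hcont : ContinuousOn θ (Icc X μ) := fun z hz =>
      (hθ z (hX.trans_le hz.1)).continuousAt.continuousWithinAt
    have hcr : ∀ k : ℕ, ∀ x y, X ≤ x → x < y → k * π ≤ θ x → k * π < θ y :=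
      fun k x y hx hxy h => cross hν0 (sin_nat_pi k) hθ (hX.trans_le hx) hxy h
    have hex : ∀ k : ℕ, ∃ x, k ∈ Icc 1 ⌊θ μ / π⌋₊ → X ≤ x ∧ x ≤ μ ∧ θ x = k * π := by
      intro k
      by_cases hk : k ∈ Icc 1 ⌊θ μ / π⌋₊
      · have h1 : (1:ℝ) ≤ k := by exact_mod_cast hk.1
        have h2 : k * π ≤ θ μ := by
          have h3 := (Nat.le_floor_iff' (by have := hk.1; omega)).1 hk.2
          rwa [le_div_iff₀ pi_pos] at h3
        have h3 : θ X ≤ k * π := by nlinarith [hθX.2, pi_pos]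
        obtain ⟨x, hx, hx2⟩ := intermediate_value_Icc hμX.le hcont ⟨h3, h2⟩
        exact ⟨x, fun _ => ⟨hx.1, hx.2, hx2⟩⟩
      · exact ⟨0, fun h => absurd h hk⟩
    choose g hg using hex
    have hset : {x : ℝ | 0 < x ∧ x ≤ μ ∧ besselJ ν x = 0} = g '' (Icc 1 ⌊θ μ / π⌋₊) := by
      ext x
      simp only [mem_ofPred_eq, mem_image]
      constructor
      · rintro ⟨h1, h2, h3⟩
        have hXx : X < x := by
          by_contra hcon
          exact hnz x h1 (not_lt.1 hcon) h3
        have h4 := (hzero x (hX.trans hXx)).1 h3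
        obtain ⟨m, hm⟩ := sin_eq_zero_iff.1 h4
        have h5 : 0 < θ x := by
          have := hcr 0 X x le_rfl hXx (by simpa using hθX.1.le)
          simpa using this
        have hm0 : 0 < m := by
          rw [← hm] at h5
          have := pos_of_mul_pos_left h5 pi_pos.le
          exact_mod_cast this
        obtain ⟨k, rfl⟩ := Int.eq_ofNat_of_zero_le hm0.le
        have hk0 : 0 < k := by exact_mod_cast hm0
        have hm' : (k:ℝ) * π = θ x := by rw [← hm]; simp
        have hkμ : (k:ℝ) * π ≤ θ μ := by
          rcases eq_or_lt_of_le h2 with h6 | h6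
          · rw [hm', h6]
          · exact (hcr k x μ hXx.le h6 hm'.le).le
        have hkI : k ∈ Icc 1 ⌊θ μ / π⌋₊ := by
          refine ⟨hk0, (Nat.le_floor_iff' hk0.ne').2 ?_⟩
          rwa [le_div_iff₀ pi_pos]
        refine ⟨k, hkI, ?_⟩
        obtain ⟨g1, g2, g3⟩ := hg k hkI
        rcases lt_trichotomy (g k) x with h7 | h7 | h7
        · have := hcr k _ _ g1 h7 g3.ge
          linarith
        · exact h7
        · have := hcr k _ _ hXx.le h7 hm'.le
          linarith
      · rintro ⟨k, hk, rfl⟩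
        obtain ⟨g1, g2, g3⟩ := hg k hk
        refine ⟨by linarith, g2, ?_⟩
        rw [hzero _ (hX.trans_le g1), g3]
        exact sin_nat_pi k
    unfold zcount
    rw [hset, InjOn.ncard_image]
    · rw [← Finset.coe_Icc, ncard_coe_finset]; simp
    · intro a ha b hb hab
      have h1 := (hg a ha).2.2
      have h2 := (hg b hb).2.2
      have hab' : g a = g b := hab
      rw [hab', h2] at h1
      have := mul_right_cancel₀ pi_pos.ne' h1
      exact_mod_cast this.symm

/-- number of lattice points on the vertical line at `ν` -/
noncomputable def Ax (ν x : ℝ) : ℕ := if ν ≤ x then ⌊Sf ν x / π + 1/4⌋₊ else 0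

theorem Ax_mono {ν x y : ℝ} (hν : 0 < ν) (hxy : x ≤ y) : Ax ν x ≤ Ax ν y := by
  unfold Ax
  by_cases hx : ν ≤ x
  · rw [if_pos hx, if_pos (hx.trans hxy)]
    have := Sf_mono hν hx (hx.trans hxy) hxy
    have hp := pi_pos
    gcongr
  · rw [if_neg hx]; exact Nat.zero_le _

/-- A generic comparison of the two counts. -/
theorem count_close {ν μ : ℝ} (hν : 1/2 ≤ ν) (hμ : ν < μ) {m p : ℕ}
    (hm' : m ≤ ⌊(Sf ν μ + π/4 - 3/4 * Ef ν μ) / π⌋₊)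
    (hp : ⌊(Sf ν μ + π/4 + 3/4 * Ef ν μ) / π⌋₊ ≤ p) :
    |(zcount ν μ : ℝ) - Ax ν μ| ≤ p - m := by
  obtain ⟨τ, h1, h2, _⟩ := zcount_floor hν hμ
  have hE := Ef_pos (by linarith : 0 < ν) hμ
  have hA : Ax ν μ = ⌊(Sf ν μ + π/4) / π⌋₊ := by
    unfold Ax; rw [if_pos hμ.le]; congr 1
    have := pi_pos.ne'
    field_simp
  rw [abs_le] at h2
  have hpi := pi_pos
  have a1 : m ≤ Ax ν μ := by
    rw [hA]; refine hm'.trans ?_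
    gcongr; linarith
  have a2 : Ax ν μ ≤ p := by
    rw [hA]; refine le_trans (Nat.floor_mono ?_) hp
    rw [div_le_div_iff_of_pos_right hpi]; linarith
  have b1 : m ≤ zcount ν μ := by
    rw [h1]; refine hm'.trans ?_
    gcongr; linarith [h2.1]
  have b2 : zcount ν μ ≤ p := by
    rw [h1]; refine le_trans ?_ hp
    gcongr; linarith [h2.2]
  have a1' : (m:ℝ) ≤ Ax ν μ := by exact_mod_cast a1
  have a2' : (Ax ν μ : ℝ) ≤ p := by exact_mod_cast a2
  have b1' : (m:ℝ) ≤ zcount ν μ := by exact_mod_cast b1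
  have b2' : (zcount ν μ : ℝ) ≤ p := by exact_mod_cast b2
  rw [abs_le]; constructor <;> linarith

theorem floor_bad {s t : ℝ} (h : |t - s| < 1) :
    |((⌊t⌋₊ : ℕ) : ℝ) - (⌊s⌋₊ : ℕ)| ≤ 1 ∧
      (⌊t⌋₊ ≠ ⌊s⌋₊ → ∃ k : ℕ, 1 ≤ k ∧ |(k:ℝ) - s| ≤ |t - s|) := by
  wlog hst : s ≤ t generalizing s t with H
  · have := H (s := t) (t := s) (by rwa [abs_sub_comm]) (by linarith)
    refine ⟨by rw [abs_sub_comm]; exact this.1, fun hne => ?_⟩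
    refine ⟨⌊s⌋₊, ?_, ?_⟩
    · have hlt : ⌊t⌋₊ < ⌊s⌋₊ := lt_of_le_of_ne (Nat.floor_mono (by linarith)) hne
      omega
    · have hlt : ⌊t⌋₊ < ⌊s⌋₊ := lt_of_le_of_ne (Nat.floor_mono (by linarith)) hne
      have h1 : (⌊s⌋₊ : ℝ) ≤ s := (Nat.le_floor_iff' (by omega)).1 le_rfl
      have h2 : t < ⌊s⌋₊ := Nat.lt_of_floor_lt hlt
      rw [abs_of_nonpos (by linarith), abs_of_nonpos (by linarith)]; linarith
  · have hts : |t - s| = t - s := abs_of_nonneg (by linarith)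
    rw [hts] at h ⊢
    have hmono : ⌊s⌋₊ ≤ ⌊t⌋₊ := Nat.floor_mono hst
    have hle : ⌊t⌋₊ ≤ ⌊s⌋₊ + 1 := by
      by_contra hcon
      have h1 : (⌊t⌋₊ : ℝ) ≤ t := (Nat.le_floor_iff' (by omega)).1 le_rfl
      have h2 := Nat.lt_floor_add_one s
      have h3 : ((⌊s⌋₊ + 2 : ℕ) : ℝ) ≤ ⌊t⌋₊ := by exact_mod_cast (by omega)
      push_cast at h3
      linarith
    refine ⟨?_, fun hne => ⟨⌊t⌋₊, ?_, ?_⟩⟩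
    · have h1 : (⌊s⌋₊ : ℝ) ≤ ⌊t⌋₊ := by exact_mod_cast hmono
      have h2 : (⌊t⌋₊ : ℝ) ≤ ⌊s⌋₊ + 1 := by exact_mod_cast hle
      rw [abs_le]; constructor <;> linarith
    · omega
    · have hlt : ⌊s⌋₊ < ⌊t⌋₊ := by omega
      have h1 : (⌊t⌋₊ : ℝ) ≤ t := (Nat.le_floor_iff' (by omega)).1 le_rfl
      have h2 : s < ⌊t⌋₊ := Nat.lt_of_floor_lt hlt
      rw [abs_of_nonneg (by linarith)]; linarith

theorem count_bad {ν μ : ℝ} (hν : 1/2 ≤ ν) (hμ : ν < μ) :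
    |(zcount ν μ : ℝ) - Ax ν μ| ≤ 1 ∧ (zcount ν μ ≠ Ax ν μ → ∃ k : ℕ, 1 ≤ k ∧
      |k * π - Sf ν μ - π/4| ≤ 3/4 * Ef ν μ ∧ |k * π - Sf ν μ - π/4| ≤ 9/8) := by
  obtain ⟨τ, h1, h2, h3⟩ := zcount_floor hν hμ
  have hA : Ax ν μ = ⌊(Sf ν μ + π/4) / π⌋₊ := by
    unfold Ax; rw [if_pos hμ.le]; congr 1
    have := pi_pos.ne'
    field_simp
  have hpi := pi_pos
  have e : |τ / π - (Sf ν μ + π/4) / π| = |τ - Sf ν μ - π/4| / π := by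
    rw [← sub_div, abs_div, abs_of_pos hpi]; congr 2; ring
  have hlt : |τ / π - (Sf ν μ + π/4) / π| < 1 := by
    rw [e, div_lt_one hpi]; linarith [pi_gt_three]
  obtain ⟨f1, f2⟩ := floor_bad hlt
  rw [h1, hA]
  refine ⟨f1, fun hne => ?_⟩
  obtain ⟨k, hk, hk2⟩ := f2 hne
  have e2 : |(k:ℝ) - (Sf ν μ + π/4) / π| = |k * π - Sf ν μ - π/4| / π := by
    rw [show (k:ℝ) - (Sf ν μ + π/4) / π = (k * π - Sf ν μ - π/4) / π by field_simp; ring,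
      abs_div, abs_of_pos hpi]
  rw [e, e2, div_le_div_iff_of_pos_right hpi] at hk2
  exact ⟨k, hk, hk2.trans h2, hk2.trans h3⟩


/-! ### Summation over the orders -/

theorem omx_mono {ν x y : ℝ} (hν : 0 < ν) (hx : ν < x) (hxy : x ≤ y) :
    om ν x / x ≤ om ν y / y := by
  have hx0 : 0 < x := hν.trans hx
  have hy0 : 0 < y := hx0.trans_le hxy
  have hωx := om_pos hν.le hx
  have hωy := om_pos hν.le (hx.trans_le hxy)
  have e1 := om_sq hν.le hx.le
  have e2 := om_sq hν.le (hx.trans_le hxy).le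
  rw [div_le_div_iff₀ hx0 hy0]
  refine le_of_sq_le_sq ?_ (by positivity)
  rw [mul_pow, mul_pow, e1, e2]
  have : x ^ 2 ≤ y ^ 2 := by gcongr
  nlinarith [mul_le_mul_of_nonneg_left this (sq_nonneg ν)]

theorem Sf_incr {ν x y : ℝ} (hν : 0 < ν) (hx : ν < x) (hxy : x ≤ y) :
    (y - x) * (om ν x / x) ≤ Sf ν y - Sf ν x := by
  have hd : ∀ z, ν < z → HasDerivAt (fun z => Sf ν z - (om ν x / x) * z)
      (om ν z / z - om ν x / x) z := by
    intro z hz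
    exact ((Sf_hasDeriv hν hz).sub ((hasDerivAt_id z).const_mul (om ν x / x))).congr_deriv (by simp)
  have := monoOn_of (D := Ici x) (f := fun z => Sf ν z - (om ν x / x) * z) (convex_Ici x)
    (fun z hz => (hd z (hx.trans_le hz)).continuousAt.continuousWithinAt)
    (fun z hz => by
      rw [interior_Ici] at hz
      exact ⟨_, hd z (hx.trans hz), sub_nonneg.2 (omx_mono hν hx (le_of_lt hz))⟩)
  have h := this (mem_Ici.2 le_rfl : x ∈ Ici x) (mem_Ici.2 hxy) hxy
  simp only at h
  linarith

theorem regionI {ν a : ℝ} (hν : 1/2 ≤ ν) (ha : 1 ≤ a) (h : ν ≤ a ^ 7 - 2 * a ^ 5) :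
    |(zcount ν (a ^ 7) : ℝ) - Ax ν (a ^ 7)| ≤
      (Ax ν (a ^ 7 + 1 / a ^ 3) : ℝ) - Ax ν (a ^ 7 - 1 / a ^ 3) := by
  have hν0 : 0 < ν := by linarith
  have ha0 : 0 < a := by linarith
  set μ := a ^ 7 with hμ
  set η := 1 / a ^ 3 with hη
  have hη0 : 0 < η := by positivity
  have hη1 : η ≤ 1 := by rw [hη, div_le_one (by positivity)]; exact one_le_pow₀ ha
  have ha5 : 1 ≤ a ^ 5 := one_le_pow₀ ha
  have hμ1 : 1 ≤ μ := one_le_pow₀ ha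
  have hμ0 : 0 < μ := by linarith
  have hνμ : ν < μ := by linarith
  have hνm : ν < μ - η := by linarith
  have hω := om_pos hν0.le hνμ
  have hω2 := om_sq hν0.le hνμ.le
  have hωm := om_pos hν0.le hνm
  have hωm2 := om_sq hν0.le hνm.le
  have hT : 2 * a ^ 12 ≤ om ν μ ^ 2 := by
    rw [hω2]
    have : (2 * a ^ 5) * a ^ 7 ≤ (μ - ν) * (μ + ν) := by
      gcongr
      · linarith
      · linarith
    nlinarith
  have hhalf : om ν μ / μ / 2 ≤ om ν (μ - η) / (μ - η) := by
    have h1 : om ν μ / 2 ≤ om ν (μ - η) := by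
      refine le_of_sq_le_sq ?_ hωm.le
      rw [div_pow, hω2, hωm2]
      nlinarith [mul_nonneg (by linarith : 0 ≤ μ - ν - 2 * η) (by linarith : 0 ≤ μ + ν - η)]
    have h2 : om ν (μ - η) / μ ≤ om ν (μ - η) / (μ - η) := by
      gcongr <;> linarith
    calc om ν μ / μ / 2 = (om ν μ / 2) / μ := by ring
      _ ≤ om ν (μ - η) / μ := by gcongr
      _ ≤ _ := h2
  have hE : 3/4 * Ef ν μ ≤ η * (om ν μ / μ / 2) := by
    unfold Ef
    have e : η * (om ν μ / μ / 2) = om ν μ / (2 * a ^ 10) := by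
      rw [hη, hμ]; field_simp
    rw [e, ← mul_div_assoc, div_le_div_iff₀ (by positivity) (by positivity)]
    have h4 : (2 * a ^ 12) ^ 2 ≤ (om ν μ ^ 2) ^ 2 := by gcongr
    have e7 : μ ^ 2 = a ^ 14 := by rw [hμ]; ring
    rw [e7]
    nlinarith [pow_pos ha0 24]
  have hup := Sf_incr hν0 hνμ (by linarith : μ ≤ μ + η)
  have hdn := Sf_incr hν0 hνm (by linarith : μ - η ≤ μ)
  have hq : 0 < om ν μ / μ := div_pos hω hμ0
  have hpi := pi_pos
  refine count_close hν hνμ ?_ ?_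
  · unfold Ax
    rw [if_pos hνm.le]
    refine Nat.floor_mono ?_
    rw [show Sf ν (μ - η) / π + 1/4 = (Sf ν (μ - η) + π/4) / π by field_simp,
      div_le_div_iff_of_pos_right hpi]
    have := mul_le_mul_of_nonneg_left hhalf hη0.le
    nlinarith
  · unfold Ax
    rw [if_pos (by linarith)]
    refine Nat.floor_mono ?_
    rw [show Sf ν (μ + η) / π + 1/4 = (Sf ν (μ + η) + π/4) / π by field_simp,
      div_le_div_iff_of_pos_right hpi]
    nlinarith [mul_pos hη0 hq]

/-- badness with level `k` -/
def Bad (ν μ : ℝ) (k : ℕ) : Prop :=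
  ν < μ ∧ |k * π - Sf ν μ - π/4| ≤ 3/4 * Ef ν μ ∧ |k * π - Sf ν μ - π/4| ≤ 9/8

theorem bad_k_le {ν a : ℝ} {k : ℕ} (hν : 1/2 ≤ ν) (ha : 1 ≤ a) (h : a ^ 7 - 2 * a ^ 5 < ν)
    (hb : Bad ν (a ^ 7) k) : (k:ℝ) ≤ 4 * a ^ 4 := by
  have hν0 : 0 < ν := by linarith
  have ha0 : 0 < a := by linarith
  obtain ⟨h1, _, h3⟩ := hb
  have hS := Sf_le hν0 h1.le
  have hω := om_pos hν0.le h1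
  have hω2 := om_sq hν0.le h1.le
  have hωb : om ν (a ^ 7) ≤ 2 * a ^ 6 := by
    refine le_of_sq_le_sq ?_ (by positivity)
    rw [hω2]
    have : (a ^ 7 - ν) * (a ^ 7 + ν) ≤ (2 * a ^ 5) * (2 * a ^ 7) := by
      gcongr
      · linarith
      · linarith
    nlinarith
  have hS2 : Sf ν (a ^ 7) ≤ 8 * a ^ 4 := by
    refine hS.trans ?_
    rw [div_le_iff₀ (by positivity)]
    calc om ν (a ^ 7) ^ 3 ≤ (2 * a ^ 6) ^ 3 := by gcongr
      _ = _ := by ring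
  have ha4 : 1 ≤ a ^ 4 := one_le_pow₀ ha
  have h5 := (abs_le.1 h3).2
  have := pi_gt_three
  have := pi_le_four
  have hk : 3 * (k:ℝ) ≤ k * π := by nlinarith [(Nat.cast_nonneg k : (0:ℝ) ≤ k)]
  linarith

theorem bad_gap {ν₁ ν₂ a : ℝ} {k : ℕ} (hν : 1/2 ≤ ν₁) (h12 : ν₁ ≤ ν₂) (ha : 1 ≤ a) (hk : 1 ≤ k)
    (hb1 : Bad ν₁ (a ^ 7) k) (hb2 : Bad ν₂ (a ^ 7) k) : ν₂ - ν₁ ≤ 3/2 * a ^ 3 / k := by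
  have hν1 : 0 < ν₁ := by linarith
  have hν2 : 0 < ν₂ := by linarith
  have ha0 : 0 < a := by linarith
  obtain ⟨g1, g2, _⟩ := hb1
  obtain ⟨f1, f2, f3⟩ := hb2
  set μ := a ^ 7 with hμ
  have hμ0 : 0 < μ := by positivity
  have hω := om_pos hν2.le f1
  have hω1 := om_pos hν1.le g1
  have e2 := om_sq hν2.le f1.le
  have e1 := om_sq hν1.le g1.le
  have hω12 : om ν₂ μ ≤ om ν₁ μ := by
    refine le_of_sq_le_sq ?_ hω1.le
    rw [e1, e2]; nlinarith
  have hE : Ef ν₁ μ ≤ Ef ν₂ μ := by unfold Ef; gcongr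
  have ho := Sf_order hν1 h12 f1
  have hk1 : (1:ℝ) ≤ k := by exact_mod_cast hk
  have hk0 : (0:ℝ) < k := by linarith
  have hs := Sf_le hν2 f1.le
  have hlow : k * μ ^ 2 ≤ om ν₂ μ ^ 3 := by
    have h5 := (abs_le.1 f3).2
    have p1 := pi_gt_d2
    have p2 := pi_lt_d2
    have : (k:ℝ) ≤ om ν₂ μ ^ 3 / μ ^ 2 := by nlinarith
    rwa [le_div_iff₀ (by positivity)] at this
  have hω4 : a ^ 4 ≤ om ν₂ μ := by
    by_contra hcon
    have h6 : om ν₂ μ ^ 3 < (a ^ 4) ^ 3 := by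
      have := not_le.1 hcon
      gcongr
    have h7 : (a ^ 4) ^ 3 ≤ μ ^ 2 := by
      rw [hμ, ← pow_mul, ← pow_mul]; exact pow_le_pow_right₀ ha (by norm_num)
    nlinarith [pow_pos hμ0 2]
  have hdiff : (ν₂ - ν₁) * (om ν₂ μ / μ) ≤ 3/2 * Ef ν₂ μ := by
    have := (abs_le.1 g2).1
    have := (abs_le.1 f2).2
    linarith
  have hd2 : (ν₂ - ν₁) * om ν₂ μ ^ 4 ≤ 3/2 * μ ^ 3 := by
    unfold Ef at hdiff
    have h8 := mul_le_mul_of_nonneg_right hdiff (by positivity : 0 ≤ om ν₂ μ ^ 3 * μ)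
    have e3 : (ν₂ - ν₁) * (om ν₂ μ / μ) * (om ν₂ μ ^ 3 * μ) = (ν₂ - ν₁) * om ν₂ μ ^ 4 := by
      field_simp
    have e4 : 3/2 * (μ ^ 2 / om ν₂ μ ^ 3) * (om ν₂ μ ^ 3 * μ) = 3/2 * μ ^ 3 := by
      field_simp
    rwa [e3, e4] at h8
  have hprod : k * μ ^ 2 * a ^ 4 ≤ om ν₂ μ ^ 4 := by
    calc k * μ ^ 2 * a ^ 4 ≤ om ν₂ μ ^ 3 * om ν₂ μ := by gcongr
      _ = _ := by ring
  have h9 : (ν₂ - ν₁) * (k * μ ^ 2 * a ^ 4) ≤ 3/2 * μ ^ 3 :=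
    (mul_le_mul_of_nonneg_left hprod (by linarith)).trans hd2
  rw [le_div_iff₀ hk0]
  have h10 : ((ν₂ - ν₁) * k) * a ^ 18 ≤ (3/2 * a ^ 3) * a ^ 18 := by
    rw [hμ] at h9
    calc ((ν₂ - ν₁) * k) * a ^ 18 = (ν₂ - ν₁) * (k * (a ^ 7) ^ 2 * a ^ 4) := by ring
      _ ≤ 3/2 * (a ^ 7) ^ 3 := h9
      _ = _ := by ring
  exact le_of_mul_le_mul_right h10 (by positivity)

theorem card_gap (s : Finset ℕ) (L : ℝ) (hL : 0 ≤ L)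
    (h : ∀ x ∈ s, ∀ y ∈ s, x ≤ y → (y:ℝ) - x ≤ L) : (s.card : ℝ) ≤ L + 1 := by
  rcases s.eq_empty_or_nonempty with h0 | h0
  · rw [h0]; simp; linarith
  · have hsub : s ⊆ Finset.Icc (s.min' h0) (s.max' h0) := fun x hx =>
      Finset.mem_Icc.2 ⟨s.min'_le x hx, s.le_max' x hx⟩
    have h1 := Finset.card_le_card hsub
    rw [Nat.card_Icc] at h1
    have h2 : s.min' h0 ≤ s.max' h0 := s.min'_le _ (s.max'_mem h0)
    have h3 := h _ (s.min'_mem h0) _ (s.max'_mem h0) h2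
    have h4 : (s.card : ℝ) ≤ (s.max' h0 + 1 - s.min' h0 : ℕ) := by exact_mod_cast h1
    rw [Nat.cast_sub (by omega)] at h4
    push_cast at h4
    linarith

theorem harm_le {a : ℝ} (ha : 1 ≤ a) :
    ∑ k ∈ Finset.Icc 1 ⌊4 * a ^ 4⌋₊, (1 / (k:ℝ)) ≤ 6 * a := by
  set K := ⌊4 * a ^ 4⌋₊ with hK
  have h := harmonic_le_one_add_log K
  have e : ((harmonic K : ℚ) : ℝ) = ∑ k ∈ Finset.Icc 1 K, (1 / (k:ℝ)) := by
    rw [harmonic_eq_sum_Icc]; push_cast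
    simp [one_div]
  rw [← e]
  refine h.trans ?_
  have ha4 : 1 ≤ a ^ 4 := one_le_pow₀ ha
  have hK1 : 1 ≤ K := Nat.le_floor (by push_cast; linarith)
  have hK0 : (0:ℝ) < K := by exact_mod_cast hK1
  have hKl : (K:ℝ) ≤ 4 * a ^ 4 := Nat.floor_le (by positivity)
  have h2 : log K ≤ log (4 * a ^ 4) := log_le_log hK0 hKl
  have h3 : log (4 * a ^ 4) = log 4 + 4 * log a := by
    rw [log_mul (by norm_num) (by positivity), log_pow]; push_cast; ring
  have h4 : log a ≤ a - 1 := log_le_sub_one_of_pos (by linarith)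
  have h5 : log 4 ≤ 3 := by
    have := log_le_sub_one_of_pos (x := 4) (by norm_num)
    linarith
  linarith

open Classical in
theorem bad_card {d : ℕ} (hd : 3 ≤ d) {a : ℝ} (ha : 1 ≤ a) (s : Finset ℕ)
    (hs : ∀ n ∈ s, a ^ 7 - 2 * a ^ 5 < (n:ℝ) + (d:ℝ) / 2 - 1 ∧
      ∃ k : ℕ, 1 ≤ k ∧ Bad ((n:ℝ) + (d:ℝ) / 2 - 1) (a ^ 7) k) : (s.card : ℝ) ≤ 13 * a ^ 4 := by
  have ha0 : 0 < a := by linarith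
  have hd' : (3:ℝ) ≤ d := by exact_mod_cast hd
  have hν : ∀ n : ℕ, 1/2 ≤ (n:ℝ) + (d:ℝ) / 2 - 1 := by
    intro n
    have : (0:ℝ) ≤ n := Nat.cast_nonneg n
    linarith
  set t : ℕ → Finset ℕ := fun k => s.filter fun n => Bad ((n:ℝ) + (d:ℝ) / 2 - 1) (a ^ 7) k with ht
  set K := ⌊4 * a ^ 4⌋₊ with hK
  have hsub : s ⊆ (Finset.Icc 1 K).biUnion t := by
    intro n hn
    obtain ⟨h1, k, hk, hb⟩ := hs n hn
    rw [Finset.mem_biUnion]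
    refine ⟨k, Finset.mem_Icc.2 ⟨hk, Nat.le_floor (bad_k_le (hν n) ha h1 hb)⟩, ?_⟩
    exact Finset.mem_filter.2 ⟨hn, hb⟩
  have h1 : s.card ≤ ∑ k ∈ Finset.Icc 1 K, (t k).card :=
    (Finset.card_le_card hsub).trans Finset.card_biUnion_le
  have h2 : (s.card : ℝ) ≤ ∑ k ∈ Finset.Icc 1 K, ((t k).card : ℝ) := by exact_mod_cast h1
  have h3 : ∑ k ∈ Finset.Icc 1 K, ((t k).card : ℝ) ≤
      ∑ k ∈ Finset.Icc 1 K, (3/2 * a ^ 3 * (1 / (k:ℝ)) + 1) := by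
    refine Finset.sum_le_sum fun k hk => ?_
    have hk1 := (Finset.mem_Icc.1 hk).1
    refine card_gap _ _ (by positivity) fun x hx y hy hxy => ?_
    have hxy' : (x:ℝ) ≤ y := by exact_mod_cast hxy
    have := bad_gap (hν x) (by linarith) ha hk1 (Finset.mem_filter.1 hx).2
      (Finset.mem_filter.1 hy).2
    calc (y:ℝ) - x = ((y:ℝ) + (d:ℝ) / 2 - 1) - ((x:ℝ) + (d:ℝ) / 2 - 1) := by ring
      _ ≤ _ := this
      _ = _ := by ring
  rw [Finset.sum_add_distrib, ← Finset.mul_sum] at h3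
  have h4 := harm_le ha
  have hKl : (K:ℝ) ≤ 4 * a ^ 4 := Nat.floor_le (by positivity)
  have h5 : ∑ k ∈ Finset.Icc 1 K, (1:ℝ) = K := by simp
  rw [h5] at h3
  have h6 : 3/2 * a ^ 3 * ∑ k ∈ Finset.Icc 1 K, (1 / (k:ℝ)) ≤ 3/2 * a ^ 3 * (6 * a) := by gcongr
  nlinarith

theorem latticeW_eq {d : ℕ} (hd : 3 ≤ d) (l M : ℕ) {x : ℝ} (hM : x ≤ M) :
    latticeW d l x = ∑ n ∈ Finset.Ico l M, Ax ((n:ℝ) + (d:ℝ) / 2 - 1) x := by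
  have hd' : (3:ℝ) ≤ d := by exact_mod_cast hd
  set F : Finset ((_ : ℕ) × ℕ) := (Finset.Ico l M).sigma
    fun n => Finset.Icc 1 (Ax ((n:ℝ) + (d:ℝ) / 2 - 1) x) with hF
  have hset : {p : ℤ × ℤ | (l : ℤ) ≤ p.1 ∧ 1 ≤ p.2 ∧ (p.1 : ℝ) + (d : ℝ) / 2 - 1 ≤ x ∧
    (p.2 : ℝ) - 1 / 4 ≤ x * gfun (((p.1 : ℝ) + (d : ℝ) / 2 - 1) / x)} =
      (fun q : (_ : ℕ) × ℕ => ((q.1 : ℤ), (q.2 : ℤ))) '' (F : Set ((_ : ℕ) × ℕ)) := by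
    ext ⟨n, k⟩
    simp only [mem_ofPred_eq, mem_image, Finset.mem_coe, hF, Finset.mem_sigma, Finset.mem_Ico,
      Finset.mem_Icc, Prod.mk.injEq, Sigma.exists]
    constructor
    · rintro ⟨h1, h2, h3, h4⟩
      obtain ⟨n, rfl⟩ := Int.eq_ofNat_of_zero_le (by omega : 0 ≤ n)
      obtain ⟨k, rfl⟩ := Int.eq_ofNat_of_zero_le (by omega : 0 ≤ k)
      simp only [Int.ofNat_eq_natCast, Int.cast_natCast] at *
      have hn0 : (0:ℝ) ≤ n := Nat.cast_nonneg n
      refine ⟨n, k, ⟨⟨by omega, ?_⟩, by omega, ?_⟩, rfl, rfl⟩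
      · have : (n:ℝ) < M := by linarith
        exact_mod_cast this
      · unfold Ax
        rw [if_pos h3]
        refine Nat.le_floor ?_
        rw [Sf_gfun (by linarith)] at h4
        linarith
    · rintro ⟨n', k', ⟨⟨h1, h2⟩, h3, h4⟩, rfl, rfl⟩
      have hn0 : (0:ℝ) ≤ n' := Nat.cast_nonneg n'
      simp only [Int.cast_natCast]
      unfold Ax at h4
      split_ifs at h4 with h5
      · refine ⟨by omega, by omega, h5, ?_⟩
        rw [Sf_gfun (by linarith)]
        have := (Nat.le_floor_iff' (by omega)).1 h4
        linarith
      · omega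
  unfold latticeW
  rw [hset, InjOn.ncard_image, ncard_coe_finset, hF, Finset.card_sigma]
  · simp
  · rintro ⟨n, k⟩ _ ⟨n', k'⟩ _ h
    simp only [Prod.mk.injEq, Nat.cast_inj] at h
    obtain ⟨rfl, rfl⟩ := h
    rfl

theorem Nsum_eq {d : ℕ} (hd : 3 ≤ d) (l M : ℕ) {x : ℝ} (hM : x ≤ M) :
    (∑' n : ℕ, if l ≤ n then (zcount ((n : ℝ) + (d : ℝ) / 2 - 1) x : ℝ) else 0) =
      ∑ n ∈ Finset.Ico l M, (zcount ((n : ℝ) + (d : ℝ) / 2 - 1) x : ℝ) := by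
  have hd' : (3:ℝ) ≤ d := by exact_mod_cast hd
  rw [tsum_eq_sum (s := Finset.Ico l M)]
  · refine Finset.sum_congr rfl fun n hn => ?_
    rw [if_pos (Finset.mem_Ico.1 hn).1]
  · intro n hn
    split_ifs with h
    · have hnM : M ≤ n := by
        by_contra hcon
        exact hn (Finset.mem_Ico.2 ⟨h, not_le.1 hcon⟩)
      have : (M:ℝ) ≤ n := by exact_mod_cast hnM
      have h0 : (0:ℝ) ≤ n := Nat.cast_nonneg n
      rw [zcount_zero (by linarith) (by linarith)]
      simp
    · rfl

open Classical in
theorem main_a {d : ℕ} (hd : 3 ≤ d) (l : ℕ) {a : ℝ} (ha : 1 ≤ a) :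
    |(∑' n : ℕ, if l ≤ n then (zcount ((n : ℝ) + (d : ℝ) / 2 - 1) (a ^ 7) : ℝ) else 0) -
          (latticeW d l (a ^ 7) : ℝ)| ≤
        (latticeW d l (a ^ 7 + 1 / a ^ 3) : ℝ) -
          (latticeW d l (a ^ 7 - 1 / a ^ 3) : ℝ) + 13 * a ^ 4 := by
  have ha0 : 0 < a := by linarith
  have hd' : (3:ℝ) ≤ d := by exact_mod_cast hd
  have hη : 0 < 1 / a ^ 3 := by positivity
  obtain ⟨M, hM⟩ := exists_nat_ge (a ^ 7 + 1 / a ^ 3)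
  rw [Nsum_eq hd l M (by linarith), latticeW_eq hd l M (by linarith : a ^ 7 ≤ M),
    latticeW_eq hd l M hM, latticeW_eq hd l M (by linarith : a ^ 7 - 1 / a ^ 3 ≤ M)]
  push_cast
  rw [← Finset.sum_sub_distrib, ← Finset.sum_sub_distrib]
  set ν : ℕ → ℝ := fun n => (n:ℝ) + (d:ℝ) / 2 - 1 with hν
  have hν2 : ∀ n, 1/2 ≤ ν n := by
    intro n
    have : (0:ℝ) ≤ n := Nat.cast_nonneg n
    simp only [hν]; linarith
  set s := (Finset.Ico l M).filter fun n => a ^ 7 - 2 * a ^ 5 < ν n ∧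
      ∃ k : ℕ, 1 ≤ k ∧ Bad (ν n) (a ^ 7) k with hs
  have hcard : (s.card : ℝ) ≤ 13 * a ^ 4 :=
    bad_card hd ha s fun n hn => (Finset.mem_filter.1 hn).2
  refine (Finset.abs_sum_le_sum_abs _ _).trans ?_
  have hterm : ∀ n ∈ Finset.Ico l M, |(zcount (ν n) (a ^ 7) : ℝ) - Ax (ν n) (a ^ 7)| ≤
      ((Ax (ν n) (a ^ 7 + 1 / a ^ 3) : ℝ) - Ax (ν n) (a ^ 7 - 1 / a ^ 3)) +
        (if a ^ 7 - 2 * a ^ 5 < ν n ∧ ∃ k : ℕ, 1 ≤ k ∧ Bad (ν n) (a ^ 7) k then 1 else 0) := by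
    intro n _
    have hmono : (Ax (ν n) (a ^ 7 - 1 / a ^ 3) : ℝ) ≤ Ax (ν n) (a ^ 7 + 1 / a ^ 3) := by
      exact_mod_cast Ax_mono (by linarith [hν2 n]) (by linarith)
    rcases le_or_gt (ν n) (a ^ 7 - 2 * a ^ 5) with h1 | h1
    · have := regionI (hν2 n) ha h1
      refine this.trans ?_
      rw [if_neg (by rintro ⟨h2, _⟩; linarith)]; linarith
    · rcases lt_or_ge (ν n) (a ^ 7) with h2 | h2
      · obtain ⟨c1, c2⟩ := count_bad (hν2 n) h2
        by_cases hne : zcount (ν n) (a ^ 7) = Ax (ν n) (a ^ 7)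
        · rw [hne, sub_self, abs_zero]
          split_ifs <;> linarith
        · obtain ⟨k, hk, hb⟩ := c2 hne
          rw [if_pos ⟨h1, k, hk, h2, hb⟩]; linarith
      · have hz : zcount (ν n) (a ^ 7) = 0 := zcount_zero (hν2 n) h2
        have hA : Ax (ν n) (a ^ 7) = 0 := by
          unfold Ax
          split_ifs with h3
          · have : a ^ 7 = ν n := le_antisymm h2 h3
            rw [this, Sf_self]
            rw [Nat.floor_eq_zero]; norm_num
            linarith [hν2 n]
          · rfl
        rw [hz, hA, sub_self, abs_zero]
        split_ifs <;> linarith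
  refine (Finset.sum_le_sum hterm).trans ?_
  rw [Finset.sum_add_distrib, Finset.sum_boole]
  linarith


/-- comparison of the zero count `𝒩_l(μ)` with the lattice count `𝒲_l(μ)`. -/
theorem zero_count_vs_lattice_count (d : ℕ) (hd : 3 ≤ d) :
    ∃ C C' : ℝ, 0 < C ∧ 0 < C' ∧ ∀ l : ℕ, ∀ μ : ℝ, 2 ≤ μ →
      |(∑' n : ℕ, if l ≤ n then (zcount ((n : ℝ) + (d : ℝ) / 2 - 1) μ : ℝ) else 0) -
          (latticeW d l μ : ℝ)| ≤
        (latticeW d l (μ + C * μ ^ (-(3 : ℝ) / 7)) : ℝ) -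
          (latticeW d l (μ - C * μ ^ (-(3 : ℝ) / 7)) : ℝ) + C' * μ ^ ((4 : ℝ) / 7) := by
  refine ⟨1, 13, one_pos, by norm_num, fun l μ hμ => ?_⟩
  have hμ0 : (0:ℝ) ≤ μ := by linarith
  obtain ⟨a, ha⟩ : ∃ a : ℝ, a = μ ^ ((1:ℝ)/7) := ⟨_, rfl⟩
  have ha1 : 1 ≤ a := by
    rw [ha]; exact Real.one_le_rpow (by linarith) (by norm_num)
  have h7 : a ^ 7 = μ := by
    rw [ha, ← Real.rpow_natCast, ← Real.rpow_mul hμ0]; norm_num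
  have h4 : μ ^ ((4 : ℝ) / 7) = a ^ 4 := by
    rw [ha, ← Real.rpow_natCast, ← Real.rpow_mul hμ0]; norm_num
  have h3 : μ ^ (-(3 : ℝ) / 7) = 1 / a ^ 3 := by
    rw [ha, ← Real.rpow_natCast, ← Real.rpow_mul hμ0, one_div, ← Real.rpow_neg hμ0]; norm_num
  have h := main_a hd l ha1
  rw [h7] at h
  rw [h3, h4, one_mul]
  exact h
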